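/- arXiv:2107.00794 — 2 statements merged into one kernel-verified Lean document; each statement's English description precedes it below -/
import Mathlib

section
/- (P. Hall) Every finitely generated abelian-by-nilpotent group is residually finite. That is, if $G$ is a finitely generated group admitting a normal abelian subgroup $A \trianglelefteq G$ such that $G/A$ is nilpotent, then the intersection of all finite-index normal subgroups of $G$ is the trivial subgroup. -/
set_option linter.unusedSectionVars false

namespace HallRF

section Core

variable {G : Type} [Group G] {J : Type} [CommRing J] {M : Type} [AddCommGroup M] [Module J M]
  [DistribMulAction G M] [SMulCommClass G J M]

/-- `V` is invariant under the subgroup `H`. -/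
def Inv (H : Subgroup G) (V : Submodule J M) : Prop := ∀ h ∈ H, ∀ v ∈ V, h • v ∈ V

/-- Ascending chain condition on `H`-invariant submodules of `V`. -/
def Noeth (H : Subgroup G) (V : Submodule J M) : Prop :=
  ∀ f : ℕ → Submodule J M, Monotone f → (∀ k, Inv H (f k)) → (∀ k, f k ≤ V) →
    ∃ n, ∀ m, n ≤ m → f m = f n

/-- `t⁻¹V + ... + t⁻ⁿV`. -/
def E (t : G) (V : Submodule J M) : ℕ → Submodule J M
  | 0 => ⊥
  | n + 1 => (V ⊔ E t V n).comap (DistribSMul.toLinearMap J M t)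

theorem mem_E_succ {t : G} {V : Submodule J M} {n : ℕ} {m : M} :
    m ∈ E t V (n + 1) ↔ t • m ∈ V ⊔ E t V n := Iff.rfl

theorem E_le_succ (t : G) (V : Submodule J M) (n : ℕ) : E t V n ≤ E t V (n + 1) := by
  induction n with
  | zero => exact bot_le
  | succ n ih =>
    intro m hm
    rw [mem_E_succ] at hm ⊢
    exact sup_le_sup_left ih _ hm

theorem E_mono (t : G) (V : Submodule J M) : Monotone (E t V) :=
  monotone_nat_of_le_succ (E_le_succ t V)

theorem F_mono (t : G) (V : Submodule J M) {a b : ℕ} (h : a ≤ b) : V ⊔ E t V a ≤ V ⊔ E t V b :=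
  sup_le_sup_left (E_mono t V h) _

theorem inv_smul_mem_F {t : G} {V : Submodule J M} {n : ℕ} {m : M} (hm : m ∈ V ⊔ E t V n) :
    t⁻¹ • m ∈ V ⊔ E t V (n + 1) := by
  apply Submodule.mem_sup_right
  rw [mem_E_succ, smul_inv_smul]
  exact hm

theorem inv_pow_smul_mem_F {t : G} {V : Submodule J M} {n : ℕ} {m : M} (hm : m ∈ V ⊔ E t V n)
    (k : ℕ) : (t⁻¹) ^ k • m ∈ V ⊔ E t V (n + k) := by
  induction k with
  | zero => simpa using hm
  | succ k ih =>
    rw [pow_succ', mul_smul]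
    exact inv_smul_mem_F ih

theorem Inv.sup {H : Subgroup G} {V W : Submodule J M} (hV : Inv H V) (hW : Inv H W) :
    Inv H (V ⊔ W) := by
  intro h hh v hv
  obtain ⟨a, ha, b, hb, rfl⟩ := Submodule.mem_sup.1 hv
  rw [smul_add]
  exact Submodule.add_mem_sup (hV h hh a ha) (hW h hh b hb)

theorem Inv.inf {H : Subgroup G} {V W : Submodule J M} (hV : Inv H V) (hW : Inv H W) :
    Inv H (V ⊓ W) := fun h hh v hv => ⟨hV h hh v hv.1, hW h hh v hv.2⟩

theorem Inv.E {H : Subgroup G} [hn : H.Normal] {V : Submodule J M} (hV : Inv H V) (t : G) (n : ℕ) :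
    Inv H (E t V n) := by
  induction n with
  | zero =>
    intro h _ v hv
    have : v = 0 := hv
    subst this
    rw [smul_zero]; exact Submodule.zero_mem _
  | succ n ih =>
    intro h hh v hv
    rw [mem_E_succ] at hv ⊢
    have := (hV.sup ih) (t * h * t⁻¹) (hn.conj_mem h hh t) _ hv
    rwa [← mul_smul, inv_mul_cancel_right, mul_smul] at this

theorem inv_sup_zpowers {H : Subgroup G} {t : G} {V : Submodule J M} (hV : Inv H V)
    (h1 : ∀ v ∈ V, t • v ∈ V) (h2 : ∀ v ∈ V, t⁻¹ • v ∈ V) : Inv (H ⊔ Subgroup.zpowers t) V := by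
  let S : Subgroup G :=
    { carrier := {g | (∀ v ∈ V, g • v ∈ V) ∧ (∀ v ∈ V, g⁻¹ • v ∈ V)}
      one_mem' := by simp
      mul_mem' := by
        rintro a b ⟨ha, ha'⟩ ⟨hb, hb'⟩
        refine ⟨fun v hv => ?_, fun v hv => ?_⟩
        · rw [mul_smul]; exact ha _ (hb _ hv)
        · rw [mul_inv_rev, mul_smul]; exact hb' _ (ha' _ hv)
      inv_mem' := by
        rintro a ⟨ha, ha'⟩
        exact ⟨ha', by simpa using ha⟩ }
  have : H ⊔ Subgroup.zpowers t ≤ S := by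
    refine sup_le (fun h hh => ⟨hV h hh, hV _ (H.inv_mem hh)⟩) ?_
    rw [Subgroup.zpowers_le]
    exact ⟨h1, h2⟩
  exact fun h hh => (this hh).1

theorem conj_pow_smul {H : Subgroup G} [hn : H.Normal] {U : Submodule J M} (hU : Inv H U) (g h : G)
    (hh : h ∈ H) (m : M) (hm : g • m ∈ U) : g • h • m ∈ U := by
  have := hU (g * h * g⁻¹) (hn.conj_mem h hh g) _ hm
  rwa [← mul_smul, inv_mul_cancel_right, mul_smul] at this

/-- every element of the span of `V` under `⟨H, t⟩` lies in some `tᵏ(V + ... + t⁻ⁿ V)`. -/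
theorem cover {H : Subgroup G} [H.Normal] {t : G} {V W : Submodule J M} (hV : Inv H V)
    (hW : ∀ U : Submodule J M, Inv (H ⊔ Subgroup.zpowers t) U → V ≤ U → W ≤ U) (m : M)
    (hm : m ∈ W) : ∃ k n, (t⁻¹) ^ k • m ∈ V ⊔ E t V n := by
  let U : Submodule J M :=
    { carrier := {m | ∃ k n, (t⁻¹) ^ k • m ∈ V ⊔ E t V n}
      zero_mem' := ⟨0, 0, by simp⟩
      add_mem' := by
        rintro a b ⟨k, n, h⟩ ⟨k', n', h'⟩
        refine ⟨k + k', n + n' + k + k', ?_⟩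
        rw [smul_add]
        refine Submodule.add_mem _ ?_ ?_
        · have := inv_pow_smul_mem_F h k'
          rw [← mul_smul, ← pow_add, add_comm k' k] at this
          exact F_mono t V (by omega) this
        · have := inv_pow_smul_mem_F h' k
          rw [← mul_smul, ← pow_add] at this
          exact F_mono t V (by omega) this
      smul_mem' := by
        rintro c m ⟨k, n, h⟩
        refine ⟨k, n, ?_⟩
        rw [smul_comm]
        exact Submodule.smul_mem _ _ h }
  refine hW U (inv_sup_zpowers ?_ ?_ ?_) ?_ hm
  · rintro h hh v ⟨k, n, hv⟩
    exact ⟨k, n, conj_pow_smul (hV.sup (hV.E t n)) _ h hh v hv⟩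
  · rintro v ⟨k, n, hv⟩
    refine ⟨k + 1, n, ?_⟩
    rwa [pow_succ, mul_smul, inv_smul_smul]
  · rintro v ⟨k, n, hv⟩
    refine ⟨k, n + 1, ?_⟩
    rw [← mul_smul, ← pow_succ, pow_succ', mul_smul]
    exact inv_smul_mem_F hv
  · intro v hv
    exact ⟨0, 0, by simpa using Submodule.mem_sup_left hv⟩

/-- Hilbert basis style step. -/
theorem noeth_step {H : Subgroup G} [H.Normal] {t : G} {V W : Submodule J M} (hV : Inv H V)
    (hN : Noeth H V)
    (hW : ∀ U : Submodule J M, Inv (H ⊔ Subgroup.zpowers t) U → V ≤ U → W ≤ U) :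
    Noeth (H ⊔ Subgroup.zpowers t) W := by
  intro f hf hinv hle
  have htm : t ∈ H ⊔ Subgroup.zpowers t := Subgroup.mem_sup_right (Subgroup.mem_zpowers t)
  have hinvH : ∀ k, Inv H (f k) := fun k h hh => hinv k h (Subgroup.mem_sup_left hh)
  let L : ℕ → ℕ → Submodule J M := fun n k => V ⊓ (f k ⊔ E t V n)
  have Linv : ∀ n k, Inv H (L n k) := fun n k => hV.inf ((hinvH k).sup (hV.E t n))
  have Lmono : ∀ {n n' k k'}, n ≤ n' → k ≤ k' → L n k ≤ L n' k' := fun h h' =>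
    inf_le_inf_left _ (sup_le_sup (hf h') (E_mono t V h))
  obtain ⟨K, hK⟩ := hN (fun n => L n n) (fun a b h => Lmono h h) (fun k => Linv k k)
    (fun k => inf_le_left)
  have h2 : ∀ n, ∃ K', ∀ m, K' ≤ m → L n m = L n K' := fun n =>
    hN (fun k => L n k) (fun a b h => Lmono le_rfl h) (fun k => Linv n k) (fun k => inf_le_left)
  choose R hR using h2
  let T := K + (Finset.range K).sup R
  have hTK : K ≤ T := Nat.le_add_right _ _
  have key : ∀ m, T ≤ m → ∀ n, L n m = L n T := by
    intro m hm n
    by_cases hn : n < K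
    · have : R n ≤ T := (Finset.le_sup (f := R) (Finset.mem_range.2 hn)).trans (Nat.le_add_left _ _)
      rw [hR n m (this.trans hm), hR n T this]
    · push Not at hn
      refine le_antisymm ?_ (Lmono le_rfl hm)
      calc L n m ≤ L (n + m) (n + m) := Lmono (by omega) (by omega)
        _ = L K K := hK _ (by omega)
        _ ≤ L n T := Lmono hn hTK
  refine ⟨T, fun m hm => le_antisymm ?_ (hf hm)⟩
  have main : ∀ n, ∀ a ∈ f m, a ∈ V ⊔ E t V n → a ∈ f T := by
    intro n
    induction n with
    | zero =>
      intro a ha hb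
      have hb' : a ∈ V := by
        have : E t V 0 = ⊥ := rfl
        rwa [this, sup_bot_eq] at hb
      have : a ∈ L 0 m := ⟨hb', Submodule.mem_sup_left ha⟩
      rw [key m hm 0] at this
      have h0 : E t V 0 = ⊥ := rfl
      simpa [L, h0, hb'] using this
    | succ n ih =>
      intro a ha hb
      obtain ⟨v, hv, w, hw, rfl⟩ := Submodule.mem_sup.1 hb
      have : v ∈ L (n + 1) m := by
        refine ⟨hv, ?_⟩
        have := Submodule.sub_mem _ (Submodule.mem_sup_left (T := E t V (n + 1)) ha)
          (Submodule.mem_sup_right (S := f m) hw)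
        simpa using this
      rw [key m hm] at this
      obtain ⟨u, hu, w', hw', huw⟩ := Submodule.mem_sup.1 this.2
      have h3 : v + w - u ∈ E t V (n + 1) := by
        have : v + w - u = w' + w := by rw [← huw]; abel
        rw [this]; exact Submodule.add_mem _ hw' hw
      have h4 : v + w - u ∈ f m := Submodule.sub_mem _ ha (hf hm hu)
      have h5 : t • (v + w - u) ∈ f T := ih _ (hinv m t htm _ h4) (mem_E_succ.1 h3)
      have h6 := hinv T t⁻¹ (Subgroup.inv_mem _ htm) _ h5
      rw [inv_smul_smul] at h6
      simpa using Submodule.add_mem _ h6 hu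
  intro a ha
  obtain ⟨k, n, h⟩ := cover hV hW a (hle m ha)
  have h1 := main n _ (hinv m ((t⁻¹) ^ k) (Subgroup.pow_mem _ (Subgroup.inv_mem _ htm) _) _ ha) h
  have h6 := hinv T (t ^ k) (Subgroup.pow_mem _ htm _) _ h1
  rwa [← mul_smul, inv_pow, mul_inv_cancel, one_smul] at h6

/-- `q` is injective modulo `W` for `q` coprime to some `s ∉ P`. -/
theorem generic_inj {H : Subgroup G} (P : Ideal J) [hP : P.IsPrime] {V W : Submodule J M}
    (hW : Inv H W) (hV : Inv H V)
    (hN : Noeth H V) : ∃ s ∉ P, ∀ q ∉ P, IsCoprime q s → ∀ v ∈ V, q • v ∈ W → v ∈ W := by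
  let T : J → Submodule J M := fun s => V ⊓ W.comap (LinearMap.lsmul J M s)
  have Tinv : ∀ s, Inv H (T s) := by
    rintro s h hh v ⟨h1, h2⟩
    refine ⟨hV h hh v h1, ?_⟩
    have h2' : s • v ∈ W := h2
    show s • h • v ∈ W
    rw [← smul_comm h s v]
    exact hW h hh _ h2'
  have Tmul : ∀ s s', T s ≤ T (s * s') := by
    rintro s s' v ⟨h1, h2⟩
    have h2' : s • v ∈ W := h2
    refine ⟨h1, ?_⟩
    show (s * s') • v ∈ W
    rw [mul_comm, mul_smul]
    exact Submodule.smul_mem _ _ h2'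
  have : ∃ s ∉ P, ∀ s' ∉ P, T (s * s') ≤ T s := by
    by_contra hcon
    push Not at hcon
    choose! g hg hg' using hcon
    let u : ℕ → J := fun n => Nat.rec 1 (fun _ s => s * g s) n
    have hu : ∀ n, u n ∉ P := by
      intro n
      induction n with
      | zero => exact fun h => hP.ne_top ((Ideal.eq_top_iff_one _).2 h)
      | succ n ih => exact fun h => (hP.mem_or_mem h).elim ih (hg _ ih)
    obtain ⟨n, hn⟩ := hN (fun n => T (u n)) (monotone_nat_of_le_succ fun n => Tmul _ _)
      (fun k => Tinv _) (fun k => inf_le_left)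
    exact hg' (u n) (hu n) (hn (n + 1) (Nat.le_succ n)).le
  obtain ⟨s, hs, hmax⟩ := this
  refine ⟨s, hs, fun q hqP hq v hv hqv => ?_⟩
  have h1 : v ∈ T (s * q) := by
    rw [mul_comm]
    exact Tmul q s ⟨hv, hqv⟩
  have h2 : s • v ∈ W := (hmax q hqP h1).2
  obtain ⟨a, b, hab⟩ := hq
  have : v = a • q • v + b • s • v := by rw [← mul_smul, ← mul_smul, ← add_smul, hab, one_smul]
  rw [this]
  exact Submodule.add_mem _ (Submodule.smul_mem _ _ hqv) (Submodule.smul_mem _ _ h2)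

theorem generic_inj_E {H : Subgroup G} [H.Normal] (P : Ideal J) [hP : P.IsPrime]
    {V : Submodule J M} (hV : Inv H V) (hN : Noeth H V) (t : G) :
    ∃ s ∉ P, ∀ q ∉ P, IsCoprime q s → ∀ n, ∀ v ∈ V, q • v ∈ E t V n → v ∈ E t V n := by
  obtain ⟨K, hK⟩ := hN (fun n => V ⊓ E t V n) (fun a b h => inf_le_inf_left _ (E_mono t V h))
    (fun k => hV.inf (hV.E t k)) (fun k => inf_le_left)
  choose s hs hs' using fun n => generic_inj P (hV.inf (hV.E t n)) hV hN
  refine ⟨∏ n ∈ Finset.range (K + 1), s n, ?_, ?_⟩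
  · rw [hP.prod_mem_iff]
    rintro ⟨n, _, hn⟩
    exact hs n hn
  · intro q hq hc n v hv hqv
    have h1 : ∀ j, j ≤ K → V ⊓ E t V n = V ⊓ E t V j → v ∈ E t V n := by
      intro j hj he
      have hcj : IsCoprime q (s j) :=
        IsCoprime.prod_right_iff.1 hc j (Finset.mem_range.2 (by omega))
      have h2 : q • v ∈ V ⊓ E t V n := ⟨Submodule.smul_mem _ _ hv, hqv⟩
      rw [he] at h2
      have h3 := hs' j q hq hcj v hv h2
      rw [← he] at h3
      exact h3.2
    by_cases hn : n ≤ K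
    · exact h1 n hn rfl
    · exact h1 K le_rfl (hK n (by omega))

theorem shrink {t : G} {V : Submodule J M} {q : J}
    (hq : ∀ n, ∀ v ∈ V, q • v ∈ E t V n → v ∈ E t V n) (k r : ℕ) (m : M)
    (h : (t⁻¹) ^ k • m ∈ V ⊔ E t V (k + r)) (hm : q • m ∈ V) : m ∈ V ⊔ E t V r := by
  induction k with
  | zero => simpa using h
  | succ k ih =>
    apply ih
    have h0 : (t⁻¹) ^ (k + 1) • q • m ∈ E t V (k + 1 + r) := by
      have := inv_pow_smul_mem_F (Submodule.mem_sup_left (T := E t V 0) hm) k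
      rw [show k + 1 + r = (k + r) + 1 by omega, mem_E_succ, pow_succ', mul_smul, smul_inv_smul]
      exact F_mono t V (by omega) this
    obtain ⟨v, hv, e, he, hve⟩ := Submodule.mem_sup.1 h
    have h1 : q • v ∈ E t V (k + 1 + r) := by
      have : q • v = (t⁻¹) ^ (k + 1) • q • m - q • e := by
        rw [smul_comm _ q m, ← hve, smul_add]; abel
      rw [this]
      exact Submodule.sub_mem _ h0 (Submodule.smul_mem _ _ he)
    have h2 : (t⁻¹) ^ (k + 1) • m ∈ E t V (k + 1 + r) := by
      rw [← hve]
      exact Submodule.add_mem _ (hq _ v hv h1) he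
    rw [show k + 1 + r = (k + r) + 1 by omega, mem_E_succ, pow_succ', mul_smul,
      smul_inv_smul] at h2
    exact h2

theorem flip {t : G} {V : Submodule J M} (r : ℕ) (m : M) (h : m ∈ V ⊔ E t V r) :
    (t⁻¹⁻¹) ^ r • m ∈ V ⊔ E t⁻¹ V r := by
  induction r generalizing m with
  | zero =>
    have h0 : E t V 0 = ⊥ := rfl
    rw [h0, sup_bot_eq] at h
    simpa using Submodule.mem_sup_left h
  | succ r ih =>
    obtain ⟨v, hv, e, he, rfl⟩ := Submodule.mem_sup.1 h
    rw [smul_add]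
    refine Submodule.add_mem _ ?_ ?_
    · have := inv_pow_smul_mem_F (t := t⁻¹) (Submodule.mem_sup_left (T := E t⁻¹ V 0) hv) (r + 1)
      rwa [zero_add] at this
    · have := ih _ (mem_E_succ.1 he)
      rw [← mul_smul, inv_inv, ← pow_succ] at this
      rw [inv_inv]
      exact F_mono _ V (Nat.le_succ r) this

theorem step_inj {H : Subgroup G} [H.Normal] (P : Ideal J) [hP : P.IsPrime] {t : G}
    {V W : Submodule J M} (hV : Inv H V) (hN : Noeth H V)
    (hW : ∀ U : Submodule J M, Inv (H ⊔ Subgroup.zpowers t) U → V ≤ U → W ≤ U) :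
    ∃ s ∉ P, ∀ q ∉ P, IsCoprime q s → ∀ m ∈ W, q • m ∈ V → m ∈ V := by
  obtain ⟨s, hs, h1⟩ := generic_inj_E P hV hN t
  obtain ⟨s', hs', h2⟩ := generic_inj_E P hV hN t⁻¹
  refine ⟨s * s', fun h => (hP.mem_or_mem h).elim hs hs', fun q hq hc m hm hqm => ?_⟩
  obtain ⟨k, n, h⟩ := cover hV hW m hm
  have h3 := shrink (h1 q hq (IsCoprime.of_mul_right_left hc)) k n m
    (F_mono t V (by omega) h) hqm
  have h4 := shrink (h2 q hq (IsCoprime.of_mul_right_right hc)) n 0 m (flip n m h3) hqm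
  have h0 : E t⁻¹ V 0 = ⊥ := rfl
  rwa [h0, sup_bot_eq] at h4

/-- chains of subgroups with cyclic steps -/
inductive Chain (H₀ : Subgroup G) : Subgroup G → Prop
  | base : Chain H₀ H₀
  | step (H : Subgroup G) (t : G) : Chain H₀ H → H.Normal → Chain H₀ (H ⊔ Subgroup.zpowers t)

/-- the invariant submodule generated by `V` -/
def gspan (K : Subgroup G) (V : Submodule J M) : Submodule J M :=
  sInf {U | Inv K U ∧ V ≤ U}

theorem le_gspan (K : Subgroup G) (V : Submodule J M) : V ≤ gspan K V :=
  le_sInf fun _ h => h.2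

theorem gspan_le {K : Subgroup G} {V U : Submodule J M} (h1 : Inv K U) (h2 : V ≤ U) :
    gspan K V ≤ U := sInf_le ⟨h1, h2⟩

theorem gspan_inv (K : Subgroup G) (V : Submodule J M) : Inv K (gspan K V) := by
  intro h hh v hv
  refine Submodule.mem_sInf.2 fun U hU => hU.1 h hh v (Submodule.mem_sInf.1 hv U hU)

theorem chain_main [IsNoetherianRing J] (P : Ideal J) [hP : P.IsPrime] {H₀ K : Subgroup G}
    (h₀ : ∀ h ∈ H₀, ∀ m : M, h • m = m) (V : Submodule J M) (hfg : V.FG) (hc : Chain H₀ K) :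
    Noeth K (gspan K V) ∧ ∃ s ∉ P, ∀ q ∉ P, IsCoprime q s →
      (∀ v ∈ gspan K V, ∃ w ∈ gspan K V, q • w = v) → ∀ v ∈ V, ∃ w ∈ V, q • w = v := by
  induction hc with
  | base =>
    have hV : gspan H₀ V = V := by
      refine le_antisymm (gspan_le ?_ le_rfl) (le_gspan _ _)
      intro h hh v hv
      rwa [h₀ h hh]
    rw [hV]
    refine ⟨?_, 1, fun h => hP.ne_top ((Ideal.eq_top_iff_one _).2 h), fun q _ _ h => h⟩
    intro f hf _ hle
    have : IsNoetherian J V := isNoetherian_of_fg_of_noetherian V hfg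
    obtain ⟨n, hn⟩ := monotone_stabilizes_iff_noetherian.2 this
      ⟨fun k => (f k).comap V.subtype, fun a b h => Submodule.comap_mono (hf h)⟩
    refine ⟨n, fun m hm => ?_⟩
    have h1 := hn m hm
    have h2 : ((f n).comap V.subtype).map V.subtype = ((f m).comap V.subtype).map V.subtype :=
      congrArg (Submodule.map V.subtype) h1
    rw [Submodule.map_comap_subtype, Submodule.map_comap_subtype, inf_eq_right.2 (hle n), inf_eq_right.2 (hle m)] at h2
    exact h2.symm
  | step H t hc hn ih =>
    obtain ⟨hN, s, hs, h⟩ := ih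
    have hmin : ∀ U : Submodule J M, Inv (H ⊔ Subgroup.zpowers t) U → gspan H V ≤ U →
        gspan (H ⊔ Subgroup.zpowers t) V ≤ U :=
      fun U hU hle => gspan_le hU ((le_gspan _ _).trans hle)
    refine ⟨noeth_step (gspan_inv H V) hN hmin, ?_⟩
    obtain ⟨s', hs', h'⟩ := step_inj P (gspan_inv H V) hN hmin
    refine ⟨s * s', fun h => (hP.mem_or_mem h).elim hs hs', fun q hq hc hdiv => ?_⟩
    refine h q hq (IsCoprime.of_mul_right_left hc) fun v hv => ?_
    have hle : gspan H V ≤ gspan (H ⊔ Subgroup.zpowers t) V :=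
      gspan_le (fun g hg => gspan_inv _ _ g (Subgroup.mem_sup_left hg)) (le_gspan _ _)
    obtain ⟨w, hw, hwv⟩ := hdiv v (hle hv)
    exact ⟨w, h' q hq (IsCoprime.of_mul_right_right hc) w hw (hwv ▸ hv), hwv⟩

/-- Nullstellensatz-type statement for monolithic modules. -/
theorem torsion_of_monolith [IsNoetherianRing J] (P : Ideal J) [hP : P.IsPrime]
    (hJ : ∀ s ∉ P, ∃ q ∉ P, IsCoprime q s ∧ ∀ h, 1 + q * h ∉ P) {H₀ : Subgroup G}
    (h₀ : ∀ h ∈ H₀, ∀ m : M, h • m = m) (hc : Chain H₀ ⊤) (x : M)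
    (hx : ∀ U : Submodule J M, Inv (⊤ : Subgroup G) U → U ≠ ⊥ → x ∈ U) :
    ∃ r ∉ P, r • x = 0 := by
  by_contra hcon
  push Not at hcon
  let V : Submodule J M := Submodule.span J {x}
  have hxV : x ∈ V := Submodule.mem_span_singleton_self x
  have hVfg : V.FG := Submodule.fg_span_singleton x
  obtain ⟨-, s, hs, h⟩ := chain_main P h₀ V hVfg hc
  obtain ⟨q, hq, hqs, hunit⟩ := hJ s hs
  have hdiv : ∀ v ∈ gspan (⊤ : Subgroup G) V, ∃ w ∈ gspan (⊤ : Subgroup G) V, q • w = v := by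
    let U := (gspan (⊤ : Subgroup G) V).map (LinearMap.lsmul J M q)
    have hUinv : Inv (⊤ : Subgroup G) U := by
      rintro g hg _ ⟨v, hv, rfl⟩
      exact ⟨g • v, gspan_inv _ _ g hg v hv, (smul_comm g q v).symm⟩
    have hU : x ∈ U := by
      refine hx U hUinv fun hbot => hcon q hq ?_
      have : q • x ∈ U := ⟨x, le_gspan _ _ hxV, rfl⟩
      rw [hbot] at this
      exact this
    have : gspan (⊤ : Subgroup G) V ≤ U :=
      gspan_le hUinv ((Submodule.span_singleton_le_iff_mem _ _).2 hU)
    intro v hv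
    obtain ⟨w, hw, hwv⟩ := this hv
    exact ⟨w, hw, hwv⟩
  obtain ⟨w, hw, hwx⟩ := h q hq hqs hdiv x hxV
  obtain ⟨a, rfl⟩ := Submodule.mem_span_singleton.1 hw
  refine hcon (1 + q * (-a)) (hunit _) ?_
  rw [add_smul, one_smul, mul_neg, neg_smul, mul_smul, hwx, add_neg_cancel]

/-- Fitting. -/
theorem fitting {V : Submodule J M} (hN : Noeth (⊤ : Subgroup G) V) (hV : V = ⊤) (x : M)
    (hx : ∀ U : Submodule J M, Inv (⊤ : Subgroup G) U → U ≠ ⊥ → x ∈ U) (hx0 : x ≠ 0)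
    (c : Module.End J M) (hcG : ∀ (g : G) m, c (g • m) = g • c m) (hcx : c x = 0) :
    ∃ k, c ^ k = 0 := by
  have hpow : ∀ (k : ℕ) (g : G) m, (c ^ k) (g • m) = g • (c ^ k) m := by
    intro k g m
    induction k with
    | zero => simp
    | succ k ih => rw [pow_succ', Module.End.mul_apply, ih, hcG]; rfl
  obtain ⟨n, hn⟩ := hN (fun k => LinearMap.ker (c ^ k))
    (monotone_nat_of_le_succ fun k v hv => by
      rw [LinearMap.mem_ker] at hv ⊢
      rw [pow_succ', Module.End.mul_apply, hv, map_zero])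
    (fun k g _ v hv => by
      rw [LinearMap.mem_ker] at hv ⊢
      rw [hpow, hv, smul_zero])
    (fun k => hV ▸ le_top)
  refine ⟨n, ?_⟩
  by_contra hne
  have : x ∈ LinearMap.range (c ^ n) := by
    refine hx _ ?_ ?_
    · rintro g _ _ ⟨v, rfl⟩
      exact ⟨g • v, hpow n g v⟩
    · rwa [Ne, LinearMap.range_eq_bot]
  obtain ⟨b, hb⟩ := this
  have h1 : b ∈ LinearMap.ker (c ^ (n + 1)) := by
    rw [LinearMap.mem_ker, pow_succ', Module.End.mul_apply, hb, hcx]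
  rw [hn (n + 1) (Nat.le_succ n), LinearMap.mem_ker, hb] at h1
  exact hx0 h1

end Core

section Order

open Polynomial

theorem pow_sub_one_expand {R : Type} [CommRing R] (y : R) (N : ℕ) :
    ∃ u, y ^ N - 1 = (y - 1) ^ 2 * u + N * (y - 1) := by
  induction N with
  | zero => exact ⟨0, by simp⟩
  | succ N ih =>
    obtain ⟨u, hu⟩ := ih
    refine ⟨y * u + N, ?_⟩
    have : y ^ (N + 1) - 1 = y * (y ^ N - 1) + (y - 1) := by ring
    rw [this, hu]
    push_cast
    ring

theorem pow_pow_expand (N : ℕ) (j : ℕ) :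
    ∃ a b : ℤ[X], X ^ (N ^ j) - 1 = (X - 1) ^ (2 ^ j) * a + (N : ℤ[X]) * b := by
  induction j with
  | zero => exact ⟨1, 0, by simp⟩
  | succ j ih =>
    obtain ⟨a, b, h⟩ := ih
    obtain ⟨u, hu⟩ := pow_sub_one_expand ((X : ℤ[X]) ^ (N ^ j)) N
    refine ⟨a ^ 2 * u, (2 * (X - 1) ^ (2 ^ j) * a * b + (N : ℤ[X]) * b ^ 2) * u + (X ^ (N ^ j) - 1), ?_⟩
    rw [pow_succ, pow_mul, hu, h]
    ring

theorem unip {R : Type} [Ring R] (y : R) (k N : ℕ) (hN : N ≠ 0) (hR : (N : R) = 0)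
    (hy : (y - 1) ^ k = 0) : ∃ L, L ≠ 0 ∧ y ^ L = 1 := by
  obtain ⟨a, b, h⟩ := pow_pow_expand N k
  refine ⟨N ^ k, pow_ne_zero _ hN, ?_⟩
  have h1 := congrArg (aeval (R := ℤ) y) h
  simp only [map_sub, map_add, map_mul, map_pow, aeval_X, map_one, map_natCast, hR, zero_mul,
    add_zero] at h1
  have : (y - 1) ^ (2 ^ k) = 0 := pow_eq_zero_of_le (Nat.lt_two_pow_self).le hy
  rw [this, zero_mul] at h1
  exact sub_eq_zero.1 h1

variable {G : Type} [Group G] {M : Type} [AddCommGroup M] [DistribMulAction G M]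

theorem exponent_of_monolith {H₀ : Subgroup G}
    (h₀ : ∀ h ∈ H₀, ∀ m : M, h • m = m) (hc : Chain H₀ ⊤) (x : M) (hx0 : x ≠ 0)
    (hx : ∀ U : Submodule ℤ M, Inv (⊤ : Subgroup G) U → U ≠ ⊥ → x ∈ U)
    (hN : Noeth (⊤ : Subgroup G) (⊤ : Submodule ℤ M)) :
    ∃ N : ℕ, N ≠ 0 ∧ ∀ m : M, N • m = 0 := by
  obtain ⟨r, hr, hrx⟩ := torsion_of_monolith (⊥ : Ideal ℤ) (by
    intro s hs
    rw [Ideal.mem_bot] at hs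
    have h3 : 0 < s ^ 2 := by positivity
    refine ⟨1 + 2 * s ^ 2, ?_, ⟨1, -2 * s, by ring⟩, ?_⟩
    · rw [Ideal.mem_bot]; omega
    · intro h hh
      rw [Ideal.mem_bot] at hh
      have : IsUnit (1 + 2 * s ^ 2) := IsUnit.of_mul_eq_one (-h) (by linarith)
      rcases Int.isUnit_iff.1 this with h | h <;> omega) h₀ hc x hx
  rw [Ideal.mem_bot] at hr
  obtain ⟨k, hk⟩ := fitting hN rfl x hx hx0 (r • (1 : Module.End ℤ M))
    (fun g m => by simpa using (smul_comm g r m).symm) (by simpa using hrx)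
  refine ⟨(r ^ k).natAbs, by simpa using fun h => absurd h hr, fun m => ?_⟩
  have h1 : (r ^ k) • m = 0 := by
    rw [_root_.smul_pow, one_pow] at hk
    exact congrArg (fun f : Module.End ℤ M => f m) hk
  rcases Int.natAbs_eq (r ^ k) with h | h
  · rwa [h, natCast_zsmul] at h1
  · rwa [h, neg_smul, natCast_zsmul, neg_eq_zero] at h1

theorem prime_of_monolith (x : M) (hx0 : x ≠ 0)
    (hx : ∀ U : Submodule ℤ M, Inv (⊤ : Subgroup G) U → U ≠ ⊥ → x ∈ U)
    (N : ℕ) (hN0 : N ≠ 0) (hN : ∀ m : M, N • m = 0) : ∃ p : ℕ, p.Prime ∧ p • x = 0 := by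
  have ho : addOrderOf x ≠ 0 := by
    intro h
    have := addOrderOf_dvd_of_nsmul_eq_zero (hN x)
    rw [h, zero_dvd_iff] at this
    exact hN0 this
  have h1 : addOrderOf x ≠ 1 := by rwa [Ne, AddMonoid.addOrderOf_eq_one_iff]
  have hp := Nat.minFac_prime h1
  set p := (addOrderOf x).minFac
  refine ⟨p, hp, ?_⟩
  obtain ⟨d, hd⟩ : p ∣ addOrderOf x := Nat.minFac_dvd _
  have hdx : d • x ≠ 0 := by
    intro h
    have h2 := addOrderOf_dvd_of_nsmul_eq_zero h
    have hd0 : 0 < d := Nat.pos_of_ne_zero (by rintro rfl; simp at hd; exact ho (by simpa using hd))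
    have h3 := Nat.le_of_dvd hd0 h2
    have := hp.two_le
    nlinarith
  have := hx (LinearMap.ker ((p : ℤ) • (1 : Module.End ℤ M))) (by
    intro g _ v hv
    rw [LinearMap.mem_ker] at hv ⊢
    have hv' : (p : ℤ) • v = 0 := hv
    show (p : ℤ) • g • v = 0
    rw [← smul_comm g, hv', smul_zero]) (by
    intro hbot
    apply hdx
    have : d • x ∈ LinearMap.ker ((p : ℤ) • (1 : Module.End ℤ M)) := by
      rw [LinearMap.mem_ker]
      show (p : ℤ) • d • x = 0
      rw [natCast_zsmul, ← mul_smul, ← hd, addOrderOf_nsmul_eq_zero]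
    rw [hbot] at this
    exact this)
  have h' : (p : ℤ) • x = 0 := this
  rwa [natCast_zsmul] at h'

theorem periodic_of_monolith {H₀ : Subgroup G}
    (h₀ : ∀ h ∈ H₀, ∀ m : M, h • m = m) (hc : Chain H₀ ⊤) (x : M)
    (hx : ∀ U : Submodule ℤ M, Inv (⊤ : Subgroup G) U → U ≠ ⊥ → x ∈ U)
    (p : ℕ) (hp : p.Prime) (hpx : p • x = 0)
    (z : G) (hz : ∀ (g : G) (m : M), z • g • m = g • z • m) : ∃ e, e ≠ 0 ∧ z ^ e • x = x := by
  have : Fact p.Prime := ⟨hp⟩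
  let zz : Module.End ℤ M := DistribSMul.toLinearMap ℤ M z
  have hzz : ∀ (n : ℕ) (m : M), (zz ^ n) m = z ^ n • m := by
    intro n m
    induction n with
    | zero => simp
    | succ n ih => rw [pow_succ', Module.End.mul_apply, ih, pow_succ', mul_smul]; rfl
  let φ : ℤ[X] →+* Module.End ℤ M := (aeval zz).toRingHom
  let : Module ℤ[X] M := Module.compHom M φ
  have hsm : ∀ (f : ℤ[X]) (m : M), f • m = aeval zz f m := fun _ _ => rfl
  have : SMulCommClass G ℤ[X] M := by
    refine ⟨fun g f m => ?_⟩
    rw [hsm, hsm]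
    have hcomm : ∀ (n : ℕ) m, (zz ^ n) (g • m) = g • (zz ^ n) m := by
      intro n m
      induction n with
      | zero => simp
      | succ n ih =>
        rw [pow_succ', Module.End.mul_apply, ih, Module.End.mul_apply]
        exact hz g _
    induction f using Polynomial.induction_on' with
    | add a b ha hb => simp only [map_add, LinearMap.add_apply, smul_add, ha, hb]
    | monomial n a =>
      simp only [aeval_monomial, Module.End.mul_apply, hcomm]
      simp [smul_comm g a]
  let π : ℤ[X] →+* (ZMod p)[X] := mapRingHom (Int.castRingHom (ZMod p))
  have : (RingHom.ker π).IsPrime := RingHom.ker_isPrime π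
  obtain ⟨f, hf, hfx⟩ := torsion_of_monolith (RingHom.ker π) (by
    intro s hs
    rw [RingHom.mem_ker] at hs
    have hdeg : 0 < (X * π s + 1).natDegree := by
      have : (X * π s + C 1).natDegree = (X * π s).natDegree := natDegree_add_C
      rw [C_1] at this
      rw [this, natDegree_X_mul hs]
      omega
    refine ⟨X * s + 1, ?_, ⟨1, -X, by ring⟩, ?_⟩
    · rw [RingHom.mem_ker]
      intro h0
      have h0' : X * π s + 1 = 0 := by simpa [π] using h0
      rw [h0'] at hdeg
      simp at hdeg
    · intro h hh
      rw [RingHom.mem_ker] at hh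
      have h1 : 1 + (X * π s + 1) * π h = 0 := by simpa [π] using hh
      have : IsUnit (X * π s + 1) := IsUnit.of_mul_eq_one (-π h) (by linear_combination -h1)
      rw [natDegree_eq_zero_of_isUnit this] at hdeg
      exact lt_irrefl _ hdeg) h₀ hc x (by
    intro U hU hne
    refine hx (AddSubgroup.toIntSubmodule U.toAddSubgroup) hU ?_
    intro hbot
    apply hne
    rw [eq_bot_iff]
    intro u hu
    have : u ∈ AddSubgroup.toIntSubmodule U.toAddSubgroup := hu
    rw [hbot] at this
    exact this)
  rw [RingHom.mem_ker] at hf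
  have : Finite (AdjoinRoot (π f)) := by
    have : Module.Finite (ZMod p) (AdjoinRoot (π f)) :=
      (AdjoinRoot.powerBasis hf).finite
    exact Module.finite_of_finite (ZMod p)
  obtain ⟨i, j, hij, heq⟩ := Finite.exists_ne_map_eq_of_infinite
    (fun n : ℕ => (AdjoinRoot.root (π f)) ^ n)
  wlog hlt : i < j generalizing i j
  · exact this j i hij.symm heq.symm (by omega)
  have hdvd : π f ∣ X ^ i - X ^ j := by
    rw [← AdjoinRoot.mk_eq_mk]
    simpa using heq
  obtain ⟨gb, hgb⟩ := hdvd
  obtain ⟨g, rfl⟩ : ∃ g, π g = gb :=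
    Polynomial.map_surjective _ (ZMod.ringHom_surjective _) gb
  have hker : π (X ^ i - X ^ j - f * g) = 0 := by
    rw [map_sub, map_mul, ← hgb]
    simp [π]
  have hCp : C (p : ℤ) ∣ X ^ i - X ^ j - f * g := by
    rw [C_dvd_iff_dvd_coeff]
    intro n
    have := congrArg (fun h => coeff h n) hker
    simp only [π, coe_mapRingHom, coeff_map, coeff_zero] at this
    exact (ZMod.intCast_zmod_eq_zero_iff_dvd _ p).1 this
  obtain ⟨h, hh⟩ := hCp
  have e1 : (X ^ i - X ^ j - f * g : ℤ[X]) • x = 0 := by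
    rw [hh, mul_comm, mul_smul, hsm (C (p : ℤ)) x, aeval_C]
    have : (algebraMap ℤ (Module.End ℤ M) (p : ℤ)) x = 0 := by
      rw [Module.algebraMap_end_apply, natCast_zsmul, hpx]
    rw [this, smul_zero]
  rw [sub_smul, mul_comm f g, mul_smul, hfx, smul_zero, sub_zero, hsm, map_sub, map_pow, map_pow,
    aeval_X, LinearMap.sub_apply, hzz, hzz, sub_eq_zero] at e1
  refine ⟨j - i, by omega, ?_⟩
  have : z ^ j = z ^ i * z ^ (j - i) := by rw [← pow_add]; congr 1; omega
  rw [this, mul_smul] at e1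
  exact (smul_left_cancel _ e1).symm

theorem finite_order_of_monolith {H₀ : Subgroup G}
    (h₀ : ∀ h ∈ H₀, ∀ m : M, h • m = m) (hc : Chain H₀ ⊤) (x : M) (hx0 : x ≠ 0)
    (hx : ∀ U : Submodule ℤ M, Inv (⊤ : Subgroup G) U → U ≠ ⊥ → x ∈ U)
    (hN : Noeth (⊤ : Subgroup G) (⊤ : Submodule ℤ M))
    (z : G) (hz : ∀ (g : G) (m : M), z • g • m = g • z • m) :
    ∃ L, L ≠ 0 ∧ ∀ m : M, z ^ L • m = m := by
  obtain ⟨N, hN0, hNM⟩ := exponent_of_monolith h₀ hc x hx0 hx hN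
  obtain ⟨p, hp, hpx⟩ := prime_of_monolith x hx0 hx N hN0 hNM
  obtain ⟨e, he0, he⟩ := periodic_of_monolith h₀ hc x hx p hp hpx z hz
  have hze : ∀ (n : ℕ) (g : G) (m : M), z ^ n • g • m = g • z ^ n • m := by
    intro n g m
    induction n with
    | zero => simp
    | succ n ih => rw [pow_succ', mul_smul, ih, hz, mul_smul]
  let y : Module.End ℤ M := DistribSMul.toLinearMap ℤ M (z ^ e)
  have hy : ∀ (n : ℕ) (m : M), (y ^ n) m = z ^ (e * n) • m := by
    intro n m
    induction n with
    | zero => simp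
    | succ n ih => rw [pow_succ', Module.End.mul_apply, ih, Nat.mul_succ, add_comm, pow_add, mul_smul]; rfl
  obtain ⟨k, hk⟩ := fitting hN rfl x hx hx0 (y - 1)
    (fun g m => by
      show z ^ e • g • m - g • m = g • (z ^ e • m - m)
      rw [smul_sub, hze])
    (by
      show z ^ e • x - x = 0
      rw [he, sub_self])
  obtain ⟨L, hL0, hL⟩ := unip y k N hN0 (by
    ext m
    have : ((N : Module.End ℤ M)) m = N • m := by simp
    rw [this, hNM]; rfl) hk
  refine ⟨e * L, mul_ne_zero he0 hL0, fun m => ?_⟩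
  rw [← hy, hL]; rfl

end Order
end HallRF

namespace HallRF

section Grp

open scoped commutatorElement

variable {G : Type} [Group G]

theorem commute_all_of_closure {S : Set G} (hS : Subgroup.closure S = ⊤) (y : G)
    (h : ∀ s ∈ S, y * s = s * y) (g : G) : y * g = g * y := by
  have : Subgroup.closure S ≤ Subgroup.centralizer {y} := by
    rw [Subgroup.closure_le]
    intro s hs
    rw [SetLike.mem_coe, Subgroup.mem_centralizer_singleton_iff]
    exact (h s hs).symm
  rw [hS] at this
  exact (Subgroup.mem_centralizer_singleton_iff.1 (this (Subgroup.mem_top g))).symm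

theorem pow_mul_of_commutator (y s : G) (h : Commute ⁅y, s⁆ y) (n : ℕ) :
    y ^ n * s = ⁅y, s⁆ ^ n * s * y ^ n := by
  induction n with
  | zero => simp
  | succ n ih =>
    have h1 : y * ⁅y, s⁆ ^ n = ⁅y, s⁆ ^ n * y := (h.pow_left n).eq.symm
    have h2 : y * s = ⁅y, s⁆ * s * y := by simp [commutatorElement_def]
    calc y ^ (n + 1) * s = y * (y ^ n * s) := by rw [pow_succ', mul_assoc]
      _ = (y * ⁅y, s⁆ ^ n) * s * y ^ n := by rw [ih]; simp only [mul_assoc]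
      _ = ⁅y, s⁆ ^ n * (y * s) * y ^ n := by rw [h1]; simp only [mul_assoc]
      _ = ⁅y, s⁆ ^ (n + 1) * s * y ^ (n + 1) := by
        rw [h2, pow_succ, pow_succ']; simp only [mul_assoc]

theorem lcs_fg [Group.FG G] (n : ℕ) :
    ∃ F : Finset G, (⊤ : Subgroup G).lowerCentralSeries n = Subgroup.normalClosure (F : Set G) := by
  classical
  obtain ⟨_, S, -, hS⟩ := Group.fg_iff'.1 (inferInstance : Group.FG G)
  induction n with
  | zero =>
    refine ⟨S, ?_⟩
    rw [Subgroup.lowerCentralSeries_zero, eq_comm, eq_top_iff, ← hS]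
    exact Subgroup.closure_le_normalClosure
  | succ n ih =>
    obtain ⟨F, hF⟩ := ih
    refine ⟨(F ×ˢ S).image fun a => ⁅a.1, a.2⁆, ?_⟩
    set K := Subgroup.normalClosure (((F ×ˢ S).image fun a => ⁅a.1, a.2⁆ : Finset G) : Set G) with hK
    have hFn : (F : Set G) ⊆ ((⊤ : Subgroup G).lowerCentralSeries n : Set G) := by
      rw [hF]; exact Subgroup.subset_normalClosure
    apply le_antisymm
    · rw [Subgroup.lowerCentralSeries_succ, Subgroup.commutator_le]
      have hle : (⊤ : Subgroup G).lowerCentralSeries n ≤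
          (Subgroup.center (G ⧸ K)).comap (QuotientGroup.mk' K) := by
        rw [hF]
        apply Subgroup.normalClosure_le_normal
        intro f hf
        have hS' : Subgroup.closure (QuotientGroup.mk' K '' (S : Set G)) = ⊤ := by
          rw [← MonoidHom.map_closure, hS, ← MonoidHom.range_eq_map, MonoidHom.range_eq_top]
          exact QuotientGroup.mk'_surjective K
        rw [SetLike.mem_coe, Subgroup.mem_comap, Subgroup.mem_center_iff]
        intro g
        refine (commute_all_of_closure hS' _ ?_ g).symm
        rintro _ ⟨s, hs, rfl⟩
        rw [← commutatorElement_eq_one_iff_mul_comm, ← map_commutatorElement]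
        rw [QuotientGroup.mk'_apply, QuotientGroup.eq_one_iff]
        apply Subgroup.subset_normalClosure
        rw [Finset.mem_coe, Finset.mem_image]
        exact ⟨(f, s), Finset.mem_product.2 ⟨hf, hs⟩, rfl⟩
      intro g hg h _
      have h1 := Subgroup.mem_center_iff.1 (Subgroup.mem_comap.1 (hle hg)) (QuotientGroup.mk' K h)
      rw [← QuotientGroup.eq_one_iff, ← QuotientGroup.mk'_apply, map_commutatorElement,
        commutatorElement_eq_one_iff_mul_comm]
      exact h1.symm
    · apply Subgroup.normalClosure_le_normal
      intro a ha
      rw [Finset.mem_coe, Finset.mem_image] at ha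
      obtain ⟨⟨f, s⟩, hfs, rfl⟩ := ha
      rw [Finset.mem_product] at hfs
      exact Subgroup.commutator_mem_commutator (hFn hfs.1) (Subgroup.mem_top s)

theorem normal_of_between {n : ℕ} {H : Subgroup G}
    (h1 : (⊤ : Subgroup G).lowerCentralSeries (n + 1) ≤ H)
    (h2 : H ≤ (⊤ : Subgroup G).lowerCentralSeries n) : H.Normal := by
  refine ⟨fun h hh g => ?_⟩
  have : ⁅h, g⁆ ∈ H := h1 (Subgroup.commutator_mem_commutator (h2 hh) (Subgroup.mem_top g))
  have e : g * h * g⁻¹ = ⁅h, g⁆⁻¹ * h := by simp [commutatorElement_def, mul_assoc]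
  rw [e]
  exact H.mul_mem (H.inv_mem this) hh

theorem chain_lcs_step [Group.FG G] {H₀ : Subgroup G} (n : ℕ)
    (h : Chain H₀ ((⊤ : Subgroup G).lowerCentralSeries (n + 1))) :
    Chain H₀ ((⊤ : Subgroup G).lowerCentralSeries n) := by
  classical
  obtain ⟨F, hF⟩ := lcs_fg (G := G) n
  have hFn : (F : Set G) ⊆ ((⊤ : Subgroup G).lowerCentralSeries n : Set G) := by
    rw [hF]; exact Subgroup.subset_normalClosure
  have hanti : (⊤ : Subgroup G).lowerCentralSeries (n + 1) ≤ (⊤ : Subgroup G).lowerCentralSeries n :=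
    Subgroup.lowerCentralSeries_antitone _ (Nat.le_succ n)
  have hb : ∀ S : Finset G, S ⊆ F → (⊤ : Subgroup G).lowerCentralSeries (n + 1) ⊔
      Subgroup.closure (S : Set G) ≤ (⊤ : Subgroup G).lowerCentralSeries n := by
    intro S hS
    exact sup_le hanti ((Subgroup.closure_le _).2 ((Finset.coe_subset.2 hS).trans hFn))
  have key : ∀ S : Finset G, S ⊆ F →
      Chain H₀ ((⊤ : Subgroup G).lowerCentralSeries (n + 1) ⊔ Subgroup.closure (S : Set G)) := by
    intro S
    induction S using Finset.induction_on with
    | empty => intro _; simpa using h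
    | insert a S _ ih =>
      intro hS
      have hS' : S ⊆ F := (Finset.subset_insert a S).trans hS
      have := Chain.step _ a (ih hS') (normal_of_between le_sup_left (hb S hS'))
      rw [Finset.coe_insert, Set.insert_eq, Subgroup.closure_union, ← Subgroup.zpowers_eq_closure,
        sup_comm (Subgroup.zpowers a), ← sup_assoc]
      exact this
  have hfin : (⊤ : Subgroup G).lowerCentralSeries (n + 1) ⊔ Subgroup.closure (F : Set G) =
      (⊤ : Subgroup G).lowerCentralSeries n := by
    apply le_antisymm (hb F subset_rfl)
    have := normal_of_between le_sup_left (hb F subset_rfl)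
    conv_lhs => rw [hF]
    apply Subgroup.normalClosure_le_normal
    exact Subgroup.subset_closure.trans (SetLike.coe_subset_coe.2 le_sup_right)
  rw [← hfin]
  exact key F subset_rfl

theorem chain_lcs [Group.FG G] (c : ℕ) : Chain ((⊤ : Subgroup G).lowerCentralSeries c) ⊤ := by
  have : ∀ H₀ : Subgroup G, ∀ n, Chain H₀ ((⊤ : Subgroup G).lowerCentralSeries n) → Chain H₀ ⊤ := by
    intro H₀ n
    induction n with
    | zero => exact fun h => h
    | succ n ih => exact fun h => ih (chain_lcs_step n h)
  exact this _ c Chain.base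

theorem finite_of_center_torsion (Q : Type) [Group Q] [Group.IsNilpotent Q] :
    Group.FG Q → (∀ z ∈ Subgroup.center Q, IsOfFinOrder z) → Finite Q := by
  refine Group.nilpotent_center_quotient_ind (P := fun Q _ _ => Group.FG Q →
    (∀ z ∈ Subgroup.center Q, IsOfFinOrder z) → Finite Q) Q ?_ ?_
  · intro Q _ _ _ _
    infer_instance
  · intro Q _ _ ih hfg ht
    have hfin : Finite (Q ⧸ Subgroup.center Q) := by
      refine ih inferInstance fun zq hzq => ?_
      obtain ⟨y, rfl⟩ := QuotientGroup.mk_surjective zq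
      have hc : ∀ g, ⁅y, g⁆ ∈ Subgroup.center Q := by
        intro g
        rw [← QuotientGroup.eq_one_iff, ← QuotientGroup.mk'_apply, map_commutatorElement,
          commutatorElement_eq_one_iff_mul_comm]
        exact (Subgroup.mem_center_iff.1 hzq _).symm
      obtain ⟨_, S, -, hS⟩ := Group.fg_iff'.1 hfg
      have hN : ∀ s ∈ S, ⁅y, s⁆ ^ (∏ s ∈ S, orderOf ⁅y, s⁆) = 1 := fun s hs =>
        orderOf_dvd_iff_pow_eq_one.1 (Finset.dvd_prod_of_mem _ hs)
      rw [isOfFinOrder_iff_pow_eq_one]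
      refine ⟨∏ s ∈ S, orderOf ⁅y, s⁆, Finset.prod_pos fun s _ => (ht _ (hc s)).orderOf_pos, ?_⟩
      rw [← QuotientGroup.mk_pow, QuotientGroup.eq_one_iff, Subgroup.mem_center_iff]
      intro g
      refine (commute_all_of_closure hS _ (fun s hs => ?_) g).symm
      rw [pow_mul_of_commutator y s (Subgroup.mem_center_iff.1 (hc s) y).symm, hN s hs, one_mul]
    have hfi : (Subgroup.center Q).FiniteIndex := Subgroup.finiteIndex_of_finite_quotient
    have hfgc : Group.FG (Subgroup.center Q) := Subgroup.fg_of_index_ne_zero _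
    have : Finite (Subgroup.center Q) := by
      let _ : CommGroup (Subgroup.center Q) := { (inferInstance : Group (Subgroup.center Q)) with
        mul_comm := fun a b => Subtype.ext (Subgroup.mem_center_iff.1 b.2 a) }
      apply CommGroup.finite_of_fg_isMulTorsion
      intro z
      obtain ⟨n, hn0, hn⟩ := isOfFinOrder_iff_pow_eq_one.1 (ht z z.2)
      exact isOfFinOrder_iff_pow_eq_one.2 ⟨n, hn0, Subtype.ext hn⟩
    exact Finite.of_subgroup_quotient (Subgroup.center Q)

theorem nilpotent_quotient {c : ℕ} (K : Subgroup G) [K.Normal]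
    (h : (⊤ : Subgroup G).lowerCentralSeries c ≤ K) : Group.IsNilpotent (G ⧸ K) := by
  rw [Subgroup.nilpotent_iff_lowerCentralSeries]
  refine ⟨c, ?_⟩
  have h1 := Subgroup.map_lowerCentralSeries (S := (⊤ : Subgroup G)) (QuotientGroup.mk' K) c
  rw [← MonoidHom.range_eq_map, MonoidHom.range_eq_top.2 (QuotientGroup.mk'_surjective K)] at h1
  rw [← h1, eq_bot_iff]
  rintro _ ⟨g, hg, rfl⟩
  exact (QuotientGroup.eq_one_iff g).2 (h hg)

/-- The conclusions about the action of `G` on `B`. -/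
theorem action_conclusions (B : Subgroup G) [hBn : B.Normal] (hcomm : ∀ a ∈ B, ∀ b ∈ B, a * b = b * a)
    (F : Finset G) (hF : B = Subgroup.normalClosure (F : Set G)) (hch : Chain B ⊤)
    (x : G) (hxB : x ∈ B) (hx1 : x ≠ 1) (hx : ∀ N : Subgroup G, N.Normal → N ≠ ⊥ → x ∈ N) :
    (∃ N : ℕ, N ≠ 0 ∧ ∀ b ∈ B, b ^ N = 1) ∧
    ∀ z : G, (∀ g, ⁅z, g⁆ ∈ Subgroup.centralizer (B : Set G)) →
      ∃ L, L ≠ 0 ∧ z ^ L ∈ Subgroup.centralizer (B : Set G) := by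
  classical
  let _ : CommGroup B := { (inferInstance : Group B) with
    mul_comm := fun a b => Subtype.ext (hcomm a a.2 b b.2) }
  let M := Additive B
  let _ : DistribMulAction G M :=
    { smul := fun g m => Additive.ofMul (MulAut.conjNormal g m.toMul)
      one_smul := fun m => by
        show Additive.ofMul (MulAut.conjNormal 1 m.toMul) = m
        rw [map_one]; rfl
      mul_smul := fun g h m => by
        show Additive.ofMul (MulAut.conjNormal (g * h) m.toMul) = _
        rw [map_mul]; rfl
      smul_zero := fun g => by
        show Additive.ofMul (MulAut.conjNormal g 1) = _
        rw [map_one]; rfl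
      smul_add := fun g a b => by
        show Additive.ofMul (MulAut.conjNormal g (a.toMul * b.toMul)) = _
        rw [map_mul]; rfl }
  have hval : ∀ (g : G) (m : M), ((g • m).toMul : G) = g * (m.toMul : G) * g⁻¹ := fun g m =>
    MulAut.conjNormal_apply g m.toMul
  have hext : ∀ m m' : M, (m.toMul : G) = (m'.toMul : G) → m = m' := fun m m' h =>
    Additive.toMul.injective (Subtype.ext h)
  let toN : Submodule ℤ M → Subgroup G := fun U =>
    { carrier := {g | ∃ m ∈ U, (m.toMul : G) = g}
      one_mem' := ⟨0, U.zero_mem, rfl⟩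
      mul_mem' := by
        rintro _ _ ⟨m, hm, rfl⟩ ⟨m', hm', rfl⟩
        exact ⟨m + m', U.add_mem hm hm', rfl⟩
      inv_mem' := by
        rintro _ ⟨m, hm, rfl⟩
        exact ⟨-m, U.neg_mem hm, rfl⟩ }
  have toN_normal : ∀ U, Inv (⊤ : Subgroup G) U → (toN U).Normal := by
    intro U hU
    refine ⟨?_⟩
    rintro _ ⟨m, hm, rfl⟩ g
    exact ⟨g • m, hU g (Subgroup.mem_top g) m hm, hval g m⟩
  have h₀ : ∀ h ∈ B, ∀ m : M, h • m = m := by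
    intro h hh m
    apply hext
    rw [hval, hcomm h hh _ m.toMul.2, mul_inv_cancel_right]
  let xm : M := Additive.ofMul ⟨x, hxB⟩
  have hxm : xm ≠ 0 := fun h => hx1 (congrArg (fun m : M => (m.toMul : G)) h)
  have hmono : ∀ U : Submodule ℤ M, Inv (⊤ : Subgroup G) U → U ≠ ⊥ → xm ∈ U := by
    intro U hU hne
    have : x ∈ toN U := by
      refine hx _ (toN_normal U hU) fun hbot => hne ?_
      rw [eq_bot_iff]
      intro m hm
      have : (m.toMul : G) ∈ toN U := ⟨m, hm, rfl⟩
      rw [hbot] at this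
      exact hext m 0 this
    obtain ⟨m, hm, hmx⟩ := this
    rwa [← hext m xm hmx]
  have hFB : ∀ f ∈ F, f ∈ B := fun f hf => by
    rw [hF]; exact Subgroup.subset_normalClosure hf
  let V : Submodule ℤ M := Submodule.span ℤ
    ((F.attach.image fun f => (Additive.ofMul (⟨f.1, hFB f.1 f.2⟩ : B) : M) : Finset M) : Set M)
  have hVfg : V.FG := ⟨_, rfl⟩
  have hspan : gspan (⊤ : Subgroup G) V = ⊤ := by
    rw [eq_top_iff]
    have hle : B ≤ toN (gspan (⊤ : Subgroup G) V) := by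
      have := toN_normal _ (gspan_inv (⊤ : Subgroup G) V)
      conv_lhs => rw [hF]
      apply Subgroup.normalClosure_le_normal
      intro f hf
      refine ⟨Additive.ofMul ⟨f, hFB f hf⟩, le_gspan _ _ (Submodule.subset_span ?_), rfl⟩
      rw [Finset.mem_coe, Finset.mem_image]
      exact ⟨⟨f, hf⟩, Finset.mem_attach _ _, rfl⟩
    intro m _
    obtain ⟨m', hm', h⟩ := hle m.toMul.2
    rwa [← hext m' m h]
  have hN : Noeth (⊤ : Subgroup G) (⊤ : Submodule ℤ M) := by
    have := (chain_main (⊥ : Ideal ℤ) h₀ V hVfg hch).1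
    rwa [hspan] at this
  refine ⟨?_, fun z hz => ?_⟩
  · obtain ⟨N, hN0, hNM⟩ := exponent_of_monolith h₀ hch xm hxm hmono hN
    refine ⟨N, hN0, fun b hb => ?_⟩
    have := hNM (Additive.ofMul ⟨b, hb⟩)
    exact congrArg (fun m : M => (m.toMul : G)) this
  · obtain ⟨L, hL0, hL⟩ := finite_order_of_monolith h₀ hch xm hxm hmono hN z (by
      intro g m
      apply hext
      rw [hval, hval, hval, hval]
      have h1 : z * g = ⁅z, g⁆ * (g * z) := by simp [commutatorElement_def, mul_assoc]
      have h2 := Subgroup.mem_centralizer_iff.1 (hz g) _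
        (hBn.conj_mem _ m.toMul.2 (g * z))
      have h3 : z * (g * (m.toMul : G) * g⁻¹) * z⁻¹ = (z * g) * (m.toMul : G) * (z * g)⁻¹ := by
        simp [mul_assoc]
      have h4 : g * (z * (m.toMul : G) * z⁻¹) * g⁻¹ = (g * z) * (m.toMul : G) * (g * z)⁻¹ := by
        simp [mul_assoc]
      rw [h3, h4, h1]
      calc ⁅z, g⁆ * (g * z) * (m.toMul : G) * (⁅z, g⁆ * (g * z))⁻¹
          = ⁅z, g⁆ * ((g * z) * (m.toMul : G) * (g * z)⁻¹) * ⁅z, g⁆⁻¹ := by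
            simp only [mul_inv_rev, mul_assoc]
        _ = _ := by rw [← h2, mul_inv_cancel_right])
    refine ⟨L, hL0, ?_⟩
    rw [Subgroup.mem_centralizer_iff]
    intro b hb
    have := congrArg (fun m : M => (m.toMul : G)) (hL (Additive.ofMul ⟨b, hb⟩))
    simp only [hval] at this
    have h' : z ^ L * b * (z ^ L)⁻¹ = b := this
    exact (mul_inv_eq_iff_eq_mul.1 h').symm

theorem finite_B (B : Subgroup G) [B.Normal] (hcomm : ∀ a ∈ B, ∀ b ∈ B, a * b = b * a)
    (F : Finset G) (hF : B = Subgroup.normalClosure (F : Set G))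
    (hexp : ∃ N : ℕ, N ≠ 0 ∧ ∀ b ∈ B, b ^ N = 1)
    (hfin : Finite (G ⧸ Subgroup.centralizer (B : Set G))) : Finite B := by
  classical
  let _ : CommGroup B := { (inferInstance : Group B) with
    mul_comm := fun a b => Subtype.ext (hcomm a a.2 b b.2) }
  have hFB : ∀ f ∈ F, f ∈ B := fun f hf => by
    rw [hF]; exact Subgroup.subset_normalClosure hf
  have hfg : Group.FG B := by
    rw [Group.fg_iff_subgroup_fg, Subgroup.fg_iff]
    refine ⟨Group.conjugatesOfSet (F : Set G), hF.symm, ?_⟩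
    refine Set.Finite.subset (Set.finite_range
      (fun a : (G ⧸ Subgroup.centralizer (B : Set G)) × F => a.1.out * a.2.1 * a.1.out⁻¹)) ?_
    intro a ha
    obtain ⟨f, hf, hfa⟩ := Group.mem_conjugatesOfSet_iff.1 ha
    obtain ⟨g, rfl⟩ := isConj_iff.1 hfa
    refine ⟨((g : G ⧸ Subgroup.centralizer (B : Set G)), ⟨f, hf⟩), ?_⟩
    obtain ⟨h, hh⟩ := QuotientGroup.mk_out_eq_mul (Subgroup.centralizer (B : Set G)) g
    simp only [hh]
    have h1 := Subgroup.mem_centralizer_iff.1 h.2 f (hFB f hf)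
    calc g * h * f * (g * h)⁻¹ = g * (h * f) * (h : G)⁻¹ * g⁻¹ := by
          simp only [mul_inv_rev, mul_assoc]
      _ = g * f * g⁻¹ := by rw [← h1]; simp [mul_assoc]
  obtain ⟨N, hN0, hN⟩ := hexp
  apply CommGroup.finite_of_fg_isMulTorsion
  intro b
  rw [isOfFinOrder_iff_pow_eq_one]
  exact ⟨N, Nat.pos_of_ne_zero hN0, Subtype.ext (hN b b.2)⟩

theorem finite_of_finite_B [Group.FG G] (B : Subgroup G) [hBn : B.Normal] [Finite B]
    [Group.IsNilpotent (G ⧸ B)] (x : G) (hx1 : x ≠ 1)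
    (hx : ∀ N : Subgroup G, N.Normal → N ≠ ⊥ → x ∈ N)
    (hC : Finite (G ⧸ Subgroup.centralizer (B : Set G))) : Finite G := by
  have : Finite (G ⧸ B) := by
    refine finite_of_center_torsion (G ⧸ B) inferInstance fun zq hzq => ?_
    obtain ⟨y, rfl⟩ := QuotientGroup.mk_surjective zq
    by_contra hinf
    obtain ⟨n, hn0, hn⟩ := isOfFinOrder_iff_pow_eq_one.1
      (isOfFinOrder_of_finite (y : G ⧸ Subgroup.centralizer (B : Set G)))
    rw [← QuotientGroup.mk_pow, QuotientGroup.eq_one_iff] at hn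
    have hcomB : ∀ g, ⁅y ^ n, g⁆ ∈ B := by
      intro g
      rw [← QuotientGroup.eq_one_iff, ← QuotientGroup.mk'_apply, map_commutatorElement,
        commutatorElement_eq_one_iff_mul_comm, map_pow]
      have : Commute (QuotientGroup.mk' B g) (QuotientGroup.mk' B y) :=
        Subgroup.mem_center_iff.1 hzq _
      exact (this.pow_right n).eq.symm
    set w := (y ^ n) ^ Nat.card B with hw
    have hwc : ∀ g, w * g = g * w := by
      intro g
      have h1 : ⁅y ^ n, g⁆ ^ Nat.card B = 1 :=
        congrArg (Subtype.val) (pow_card_eq_one' (x := (⟨_, hcomB g⟩ : B)))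
      rw [hw, pow_mul_of_commutator (y ^ n) g
        (Subgroup.mem_centralizer_iff.1 hn _ (hcomB g)), h1, one_mul]
    have hwinf : ¬ IsOfFinOrder w := by
      intro h
      have h1 := (QuotientGroup.mk' B).isOfFinOrder h
      rw [hw, map_pow, map_pow, ← pow_mul] at h1
      refine hinf (h1.of_pow (n := n * Nat.card B) ?_)
      exact mul_ne_zero hn0.ne' Nat.card_pos.ne'
    have hinj : Function.Injective fun i : ℤ => w ^ i := injective_zpow_iff_not_isOfFinOrder.2 hwinf
    have hmem : ∀ i : ℤ, i ≠ 0 → x ∈ Subgroup.zpowers (w ^ i) := by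
      intro i hi
      refine hx _ ⟨?_⟩ ?_
      · intro h hh g
        obtain ⟨j, rfl⟩ := hh
        have h1 : Commute w g := hwc g
        have h2 : Commute ((w ^ i) ^ j) g := (h1.zpow_left i).zpow_left j
        have h3 : g * (w ^ i) ^ j * g⁻¹ = (w ^ i) ^ j := by rw [← h2.eq, mul_inv_cancel_right]
        show g * (w ^ i) ^ j * g⁻¹ ∈ _
        rw [h3]
        exact Subgroup.zpow_mem _ (Subgroup.mem_zpowers _) _
      · rw [Ne, Subgroup.zpowers_eq_bot]
        intro h
        exact hi (hinj (by simpa using h))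
    obtain ⟨j, hj⟩ := hmem 1 one_ne_zero
    have hj' : w ^ j = x := by simpa using hj
    have hj0 : j ≠ 0 := by
      rintro rfl
      exact hx1 (by simpa using hj'.symm)
    obtain ⟨i, hi⟩ := hmem (2 * j) (by omega)
    have hi' : w ^ (2 * j * i) = w ^ j := by rw [hj', zpow_mul]; exact hi
    have h5 : 2 * j * i = j := hinj hi'
    have h6 : j * (2 * i - 1) = 0 := by linarith
    rcases mul_eq_zero.1 h6 with h | h <;> omega
  exact Finite.of_subgroup_quotient B

theorem finite_of_monolith [Group.FG G] (c : ℕ)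
    (hcomm : ∀ a ∈ (⊤ : Subgroup G).lowerCentralSeries c,
      ∀ b ∈ (⊤ : Subgroup G).lowerCentralSeries c, a * b = b * a) (x : G) (hx1 : x ≠ 1)
    (hx : ∀ N : Subgroup G, N.Normal → N ≠ ⊥ → x ∈ N) : Finite G := by
  obtain ⟨F, hF⟩ := lcs_fg (G := G) c
  set B := (⊤ : Subgroup G).lowerCentralSeries c with hB
  have hBn : B.Normal := by rw [hF]; infer_instance
  have hBC : B ≤ Subgroup.centralizer (B : Set G) := fun b hb =>
    Subgroup.mem_centralizer_iff.2 fun a ha => hcomm a ha b hb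
  have hnB : Group.IsNilpotent (G ⧸ B) := nilpotent_quotient (c := c) B le_rfl
  have hnC : Group.IsNilpotent (G ⧸ Subgroup.centralizer (B : Set G)) :=
    nilpotent_quotient (c := c) _ hBC
  by_cases hbot : B = ⊥
  · have : Finite B := by rw [hbot]; infer_instance
    refine finite_of_finite_B B x hx1 hx ?_
    have htop : Subgroup.centralizer (B : Set G) = ⊤ := by
      rw [eq_top_iff]
      intro g _
      rw [Subgroup.mem_centralizer_iff]
      intro b hb
      rw [SetLike.mem_coe, hbot, Subgroup.mem_bot] at hb
      simp [hb]
    rw [htop]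
    infer_instance
  · have hxB : x ∈ B := hx B hBn hbot
    obtain ⟨h1, h2⟩ := action_conclusions B hcomm F hF (chain_lcs c) x hxB hx1 hx
    have hC : Finite (G ⧸ Subgroup.centralizer (B : Set G)) := by
      refine finite_of_center_torsion _ inferInstance fun zq hzq => ?_
      obtain ⟨z, rfl⟩ := QuotientGroup.mk_surjective zq
      obtain ⟨L, hL0, hL⟩ := h2 z (by
        intro g
        rw [← QuotientGroup.eq_one_iff, ← QuotientGroup.mk'_apply, map_commutatorElement,
          commutatorElement_eq_one_iff_mul_comm]
        exact (Subgroup.mem_center_iff.1 hzq _).symm)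
      rw [isOfFinOrder_iff_pow_eq_one]
      refine ⟨L, Nat.pos_of_ne_zero hL0, ?_⟩
      rw [← QuotientGroup.mk_pow, QuotientGroup.eq_one_iff]
      exact hL
    have := finite_B B hcomm F hF h1 hC
    exact finite_of_finite_B B x hx1 hx hC

theorem exists_maximal_normal (x : G) (hx1 : x ≠ 1) :
    ∃ N : Subgroup G, N.Normal ∧ x ∉ N ∧ ∀ K : Subgroup G, K.Normal → N ≤ K → x ∉ K → K = N := by
  obtain ⟨N, hN⟩ := zorn_le₀ {N : Subgroup G | N.Normal ∧ x ∉ N} (by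
    intro c hc hchain
    by_cases hne : c.Nonempty
    · have hdir : DirectedOn (· ≤ ·) c := hchain.directedOn
      refine ⟨sSup c, ⟨⟨?_⟩, ?_⟩, fun z hz => le_sSup hz⟩
      · intro h hh g
        rw [Subgroup.mem_sSup_of_directedOn hne hdir] at hh ⊢
        obtain ⟨K, hK, hhK⟩ := hh
        exact ⟨K, hK, (hc hK).1.conj_mem h hhK g⟩
      · intro hh
        rw [Subgroup.mem_sSup_of_directedOn hne hdir] at hh
        obtain ⟨K, hK, hhK⟩ := hh
        exact (hc hK).2 hhK
    · refine ⟨⊥, ⟨inferInstance, by simpa using hx1⟩, fun z hz => (hne ⟨z, hz⟩).elim⟩)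
  exact ⟨N, hN.prop.1, hN.prop.2, fun K hK hle hxK => le_antisymm (hN.le_of_ge ⟨hK, hxK⟩ hle) hle⟩

end Grp
end HallRF

/-- **P. Hall's theorem**: every finitely generated abelian-by-nilpotent group is
residually finite. -/
theorem stmt7 (G : Type) [Group G] [Group.FG G] (A : Subgroup G) [A.Normal]
    (hA : ∀ a ∈ A, ∀ b ∈ A, a * b = b * a)
    [Group.IsNilpotent (G ⧸ A)] :
    (⨅ (H : Subgroup G) (_ : H.Normal) (_ : H.FiniteIndex), H) = ⊥ := by
  rw [eq_bot_iff]
  intro x hx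
  rw [Subgroup.mem_bot]
  by_contra hx1
  obtain ⟨N, hN, hxN, hmax⟩ := HallRF.exists_maximal_normal x hx1
  obtain ⟨c, hc⟩ := Subgroup.nilpotent_iff_lowerCentralSeries.1
    (inferInstance : Group.IsNilpotent (G ⧸ A))
  have hcA : (⊤ : Subgroup G).lowerCentralSeries c ≤ A := by
    intro g hg
    have := Subgroup.lowerCentralSeries.map (QuotientGroup.mk' A) c (Subgroup.mem_map_of_mem _ hg)
    rw [hc, Subgroup.mem_bot] at this
    exact (QuotientGroup.eq_one_iff g).1 this
  have hmap : (⊤ : Subgroup (G ⧸ N)).lowerCentralSeries c =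
      ((⊤ : Subgroup G).lowerCentralSeries c).map (QuotientGroup.mk' N) := by
    rw [Subgroup.map_lowerCentralSeries, ← MonoidHom.range_eq_map,
      MonoidHom.range_eq_top.2 (QuotientGroup.mk'_surjective N)]
  have hfin : Finite (G ⧸ N) := by
    refine HallRF.finite_of_monolith c ?_ (x : G ⧸ N) ?_ ?_
    · rw [hmap]
      rintro _ ⟨a, ha, rfl⟩ _ ⟨b, hb, rfl⟩
      rw [← map_mul, ← map_mul, hA a (hcA ha) b (hcA hb)]
    · rwa [Ne, QuotientGroup.eq_one_iff]
    · intro K hK hne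
      by_contra hxK
      apply hne
      have hle : N ≤ K.comap (QuotientGroup.mk' N) := by
        intro n hn
        rw [Subgroup.mem_comap, QuotientGroup.mk'_apply, (QuotientGroup.eq_one_iff n).2 hn]
        exact K.one_mem
      have := hmax (K.comap (QuotientGroup.mk' N)) inferInstance hle hxK
      rw [eq_bot_iff]
      intro k hk
      obtain ⟨g, rfl⟩ := QuotientGroup.mk_surjective k
      have hg : g ∈ K.comap (QuotientGroup.mk' N) := hk
      rw [this] at hg
      exact (QuotientGroup.eq_one_iff g).2 hg
  have hfi : N.FiniteIndex := Subgroup.finiteIndex_of_finite_quotient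
  apply hxN
  simp only [Subgroup.mem_iInf] at hx
  exact hx N hN hfi
end

section
/- Let $G$ be a finitely generated nilpotent group and let $M$ be a finitely generated module over the integral group ring $\mathbb{Z}[G]$. Then $M$ is residually finite as a $\mathbb{Z}[G]$-module: the intersection of all $\mathbb{Z}[G]$-submodules $M' \subseteq M$ with $M/M'$ finite is $0$. -/
/-- Relative separation of the pair `A ≤ B` at the prime `π`, after localization at `π`. -/
def SepRel {J W : Type} [CommRing J] [AddCommGroup W] [Module J W] (π : J)
    (A B : Submodule J W) : Prop :=
  (∀ (n : ℕ), ∀ b ∈ B, π ^ n • b ∈ A → ∃ s : J, ¬ π ∣ s ∧ s • b ∈ A) ∧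
  (∀ b ∈ B, (∀ n : ℕ, ∃ s : J, ¬ π ∣ s ∧ ∃ u ∈ B, π ^ n • u - s • b ∈ A) →
    ∃ s : J, ¬ π ∣ s ∧ s • b ∈ A)

section sep
variable {J W U : Type} [CommRing J] [AddCommGroup W] [Module J W]
  [AddCommGroup U] [Module J U] {π : J}

lemma Prime.not_dvd_mul' (hπ : Prime π) {a b : J} (ha : ¬ π ∣ a) (hb : ¬ π ∣ b) :
    ¬ π ∣ a * b := fun h => (hπ.dvd_or_dvd h).elim ha hb

lemma SepRel.refl (hπ : Prime π) (A : Submodule J W) : SepRel π A A :=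
  ⟨fun _ b hb _ => ⟨1, hπ.not_dvd_one, by simpa using hb⟩,
    fun b hb _ => ⟨1, hπ.not_dvd_one, by simpa using hb⟩⟩

lemma SepRel.trans (hπ : Prime π) {A B C : Submodule J W} (hAB : A ≤ B)
    (h1 : SepRel π A B) (h2 : SepRel π B C) : SepRel π A C := by
  constructor
  · intro n c hc h
    obtain ⟨s, hs, hsc⟩ := h2.1 n c hc (hAB h)
    obtain ⟨t, ht, htc⟩ := h1.1 n (s • c) hsc (by
      rw [smul_comm]; exact A.smul_mem _ h)
    exact ⟨t * s, hπ.not_dvd_mul' ht hs, by rwa [mul_smul]⟩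
  · intro c hc h
    obtain ⟨s, hs, hsc⟩ := h2.2 c hc (fun n => by
      obtain ⟨s, hs, u, hu, hh⟩ := h n
      exact ⟨s, hs, u, hu, hAB hh⟩)
    obtain ⟨t, ht, htc⟩ := h1.2 (s • c) hsc (fun n => by
      obtain ⟨s1, hs1, u, hu, hh⟩ := h n
      have hu' : π ^ n • (s • u) ∈ B := by
        have e : π ^ n • (s • u) = s • (π ^ n • u - s1 • c) + s1 • (s • c) := by
          rw [smul_sub, smul_comm s s1 c, smul_comm s (π ^ n) u]; abel
        rw [e]
        exact B.add_mem (B.smul_mem _ (hAB hh)) (B.smul_mem _ hsc)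
      obtain ⟨s2, hs2, hu2⟩ := h2.1 n (s • u) (C.smul_mem _ hu) hu'
      refine ⟨s2 * s1, hπ.not_dvd_mul' hs2 hs1, s2 • s • u, hu2, ?_⟩
      have e : π ^ n • (s2 • s • u) - (s2 * s1) • (s • c)
          = (s2 * s) • (π ^ n • u - s1 • c) := by
        simp only [smul_sub, ← mul_smul]; congr 2 <;> ring
      rw [e]
      exact A.smul_mem _ hh)
    exact ⟨t * s, hπ.not_dvd_mul' ht hs, by rwa [mul_smul]⟩

lemma SepRel.union (hπ : Prime π) (B : ℕ → Submodule J W) (hm : Monotone B)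
    (h : ∀ n, SepRel π (B n) (B (n + 1))) (C : Submodule J W) (hC : ∀ c ∈ C, ∃ n, c ∈ B n) :
    SepRel π (B 0) C := by
  have key : ∀ m k, SepRel π (B m) (B (m + k)) := by
    intro m k
    induction k with
    | zero => exact SepRel.refl hπ _
    | succ k ih => exact ih.trans hπ (hm (by omega)) (h (m + k))
  have key' : ∀ m n, m ≤ n → SepRel π (B m) (B n) := by
    intro m n hmn
    obtain ⟨k, rfl⟩ := Nat.exists_eq_add_of_le hmn
    exact key m k
  constructor
  · intro n c hc hn
    obtain ⟨m, hm'⟩ := hC c hc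
    exact (key' 0 m (by omega)).1 n c hm' hn
  · intro c hc hn
    obtain ⟨m, hm'⟩ := hC c hc
    refine (key' 0 m (by omega)).2 c hm' (fun n => ?_)
    obtain ⟨s, hs, u, hu, hh⟩ := hn n
    obtain ⟨l, hl⟩ := hC u hu
    have hu' : π ^ n • u ∈ B m := by
      have e : π ^ n • u = (π ^ n • u - s • c) + s • c := by abel
      rw [e]
      exact (B m).add_mem (hm (Nat.zero_le m) hh) ((B m).smul_mem _ hm')
    obtain ⟨s1, hs1, hu1⟩ := (key' m (max m l) (le_max_left _ _)).1 n u
      (hm (le_max_right _ _) hl) hu'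
    refine ⟨s1 * s, hπ.not_dvd_mul' hs1 hs, s1 • u, hu1, ?_⟩
    have e : π ^ n • (s1 • u) - (s1 * s) • c = s1 • (π ^ n • u - s • c) := by
      simp only [smul_sub, ← mul_smul]; congr 2; ring
    rw [e]
    exact (B 0).smul_mem _ hh

lemma SepRel.transfer (g : U →ₗ[J] W) {A B : Submodule J W} {K : Submodule J U}
    (hK : ∀ u, u ∈ K ↔ g u ∈ A) (hB : ∀ b ∈ B, ∃ u, b - g u ∈ A)
    (h : SepRel π K ⊤) : SepRel π A B := by
  have back : ∀ (s : J) (b : W) (u : U), b - g u ∈ A → s • u ∈ K → s • b ∈ A := by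
    intro s b u hbu hs
    rw [hK, map_smul] at hs
    have e : s • b = s • (b - g u) + s • g u := by rw [smul_sub]; abel
    rw [e]; exact A.add_mem (A.smul_mem _ hbu) hs
  constructor
  · intro n b hb hn
    obtain ⟨u, hu⟩ := hB b hb
    obtain ⟨s, hs, hsu⟩ := h.1 n u trivial (by
      rw [hK, map_smul]
      have e : π ^ n • g u = π ^ n • b - π ^ n • (b - g u) := by rw [smul_sub]; abel
      rw [e]; exact A.sub_mem hn (A.smul_mem _ hu))
    exact ⟨s, hs, back s b u hu hsu⟩
  · intro b hb hn
    obtain ⟨u, hu⟩ := hB b hb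
    obtain ⟨s, hs, hsu⟩ := h.2 u trivial (fun n => by
      obtain ⟨s, hs, c, hc, hh⟩ := hn n
      obtain ⟨v, hv⟩ := hB c hc
      refine ⟨s, hs, v, trivial, ?_⟩
      rw [hK, map_sub, map_smul, map_smul]
      have e : π ^ n • g v - s • g u
          = (π ^ n • c - s • b) - π ^ n • (c - g v) + s • (b - g u) := by
        simp only [smul_sub]; abel
      rw [e]
      exact A.add_mem (A.sub_mem hh (A.smul_mem _ hv)) (A.smul_mem _ hu))
    exact ⟨s, hs, back s b u hu hsu⟩

lemma SepRel.pullback (g : U →ₗ[J] W) {K : Submodule J U}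
    (hK : ∀ u, u ∈ K ↔ g u = 0) 
    (h : SepRel π (⊥ : Submodule J W) ⊤) : SepRel π K ⊤ := by
  constructor
  · intro n b _ hn
    obtain ⟨s, hs, h'⟩ := h.1 n (g b) trivial (by
      rw [hK, map_smul] at hn; simpa using hn)
    exact ⟨s, hs, by rw [hK, map_smul]; simpa using h'⟩
  · intro b _ hn
    obtain ⟨s, hs, h'⟩ := h.2 (g b) trivial (fun n => by
      obtain ⟨s, hs, u, _, hu⟩ := hn n
      refine ⟨s, hs, g u, trivial, ?_⟩
      rw [hK, map_sub, map_smul, map_smul] at hu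
      simpa using hu)
    exact ⟨s, hs, by rw [hK, map_smul]; simpa using h'⟩

end sep

/-- generic separation of all finite modules over the `J`-algebra `R`, and Noetherianity. -/
def GP (J R : Type) [CommRing J] [Ring R] [Algebra J R] : Prop :=
  IsNoetherianRing R ∧ ∀ (M : Type) [AddCommGroup M] [Module J M] [Module R M]
    [IsScalarTower J R M] [Module.Finite R M], ∃ α : J, α ≠ 0 ∧ ∀ π : J, Prime π → ¬ π ∣ α →
      SepRel π (⊥ : Submodule J M) ⊤

lemma sep_ideal {J : Type} [CommRing J] [IsDomain J] [IsNoetherianRing J] (I : Ideal J) :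
    ∃ α : J, α ≠ 0 ∧ ∀ π : J, Prime π → ¬ π ∣ α → SepRel π (I : Submodule J J) ⊤ := by
  by_cases hI : I = ⊥
  · subst hI
    refine ⟨1, one_ne_zero, fun π hπ _ => ⟨?_, ?_⟩⟩
    · intro n b _ hn
      have : b = 0 := by
        have h2 : π ^ n * b = 0 := by simpa using hn
        exact (mul_eq_zero.1 h2).resolve_left (pow_ne_zero _ hπ.ne_zero)
      exact ⟨1, hπ.not_dvd_one, by simp [this]⟩
    · intro b _ hn
      refine ⟨1, hπ.not_dvd_one, ?_⟩
      have hd : ∀ n, π ^ n ∣ b := by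
        intro n
        obtain ⟨s, hs, u, _, hu⟩ := hn n
        have hu' : π ^ n * u = s * b := by
          simpa [sub_eq_zero] using hu
        exact hπ.pow_dvd_of_dvd_mul_left n hs ⟨u, hu'.symm⟩
      by_contra hb
      have hb' : b ≠ 0 := by
        rintro rfl; simp at hb
      obtain ⟨n, hn⟩ := FiniteMultiplicity.of_not_isUnit hπ.not_isUnit hb'
      exact hn (hd _)
  · obtain ⟨a, ha, ha0⟩ := Submodule.exists_mem_ne_zero_of_ne_bot hI
    refine ⟨a, ha0, fun π hπ hd => ⟨?_, ?_⟩⟩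
    · intro n b _ _
      exact ⟨a, hd, I.mul_mem_right _ ha⟩
    · intro b _ _
      exact ⟨a, hd, I.mul_mem_right _ ha⟩

lemma GP_base (J : Type) [CommRing J] [IsDomain J] [IsNoetherianRing J] : GP J J := by
  refine ⟨inferInstance, ?_⟩
  intro M _ iJ iR iT iF
  -- the two module structures agree
  have hm : iR = iJ := by
    refine Module.ext' _ _ (fun r m => ?_)
    have := iT.smul_assoc r 1 m
    have h1 : @HSMul.hSMul J M M (@instHSMul J M iR.toSMul) 1 m = m := iR.one_smul m
    rw [h1, smul_eq_mul, mul_one] at this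
    exact this
  subst hm
  obtain ⟨T, hT⟩ := iF.fg_top
  rw [← hT]
  clear hT
  classical
  induction T using Finset.induction_on with
  | empty =>
    refine ⟨1, one_ne_zero, fun π hπ _ => ?_⟩
    simpa using SepRel.refl hπ _
  | insert m T hm ih =>
    obtain ⟨α, hα, h⟩ := ih
    obtain ⟨β, hβ, h'⟩ := sep_ideal ((Submodule.span J (T : Set M)).comap
      (LinearMap.toSpanSingleton J M m))
    refine ⟨α * β, mul_ne_zero hα hβ, fun π hπ hd => ?_⟩
    refine (h π hπ (fun h => hd (h.mul_right _))).trans hπ bot_le ?_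
    refine SepRel.transfer (LinearMap.toSpanSingleton J M m) (fun u => Iff.rfl) ?_
      (h' π hπ (fun h => hd (h.mul_left _)))
    intro b hb
    rw [Finset.coe_insert, Submodule.mem_span_insert] at hb
    obtain ⟨a, z, hz, rfl⟩ := hb
    exact ⟨a, by simpa using hz⟩

set_option linter.unusedSectionVars false
set_option linter.style.haveILetI false

/-! The skew extension step -/
section step
variable {J R S M : Type} [CommRing J] [Ring R] [Ring S] [Algebra J R] [Algebra J S]
  [AddCommGroup M] [Module J M] [Module R M] [Module S M] [IsScalarTower J R M]
  [IsScalarTower J S M]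

/-- `{m | x ^ n • m ∈ P}` as an `R`-submodule. -/
def pull (f : R →ₐ[J] S) (x : Sˣ) (hx : ∀ (n : ℤ) (r : R), ∃ r' : R,
    ((x ^ n : Sˣ) : S) * f r = f r' * ((x ^ n : Sˣ) : S))
    (hf : ∀ (r : R) (m : M), r • m = f r • m) (n : ℤ) (P : Submodule R M) : Submodule R M where
  carrier := {m | x ^ n • m ∈ P}
  zero_mem' := by simp
  add_mem' := by
    intro a b ha hb
    simp only [Set.mem_ofPred_eq, smul_add] at *
    exact P.add_mem ha hb
  smul_mem' := by
    intro r m hm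
    simp only [Set.mem_ofPred_eq] at *
    obtain ⟨r', hr'⟩ := hx n r
    have : x ^ n • r • m = r' • x ^ n • m := by
      rw [hf, hf, Units.smul_def, Units.smul_def, ← mul_smul, hr', mul_smul]
    rw [this]; exact P.smul_mem _ hm

variable (f : R →ₐ[J] S) (x : Sˣ) (hx : ∀ (n : ℤ) (r : R), ∃ r' : R,
    ((x ^ n : Sˣ) : S) * f r = f r' * ((x ^ n : Sˣ) : S))
    (hf : ∀ (r : R) (m : M), r • m = f r • m)

lemma mem_pull {n : ℤ} {P : Submodule R M} {m : M} :
    m ∈ pull f x hx hf n P ↔ x ^ n • m ∈ P := Iff.rfl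

/-- `W n = ∑_{i<n} x ^ i V` -/
def Wn (V : Submodule R M) : ℕ → Submodule R M
  | 0 => ⊥
  | n + 1 => Wn V n ⊔ pull f x hx hf (-n) V

lemma Wn_mono (V : Submodule R M) : Monotone (Wn f x hx hf V) :=
  monotone_nat_of_le_succ (fun _ => le_sup_left)

lemma Wn_shift (V : Submodule R M) (n : ℕ) : ∀ m ∈ Wn f x hx hf V n,
    x • m ∈ Wn f x hx hf V (n + 1) := by
  induction n with
  | zero =>
    intro m hm
    have : m = 0 := by simpa [Wn] using hm
    subst this; simp
  | succ n ih =>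
    intro m hm
    obtain ⟨a, ha, b, hb, rfl⟩ := Submodule.mem_sup.1 hm
    rw [smul_add]
    refine Submodule.add_mem _ (Wn_mono f x hx hf V (Nat.le_succ _) (ih a ha)) ?_
    refine Submodule.mem_sup_right ?_
    rw [mem_pull] at hb ⊢
    rw [← mul_smul, ← zpow_add_one]
    convert hb using 2
    push_cast; ring_nf

lemma Wn_shift_pow (V : Submodule R M) (n k : ℕ) : ∀ m ∈ Wn f x hx hf V n,
    x ^ k • m ∈ Wn f x hx hf V (n + k) := by
  induction k with
  | zero => intro m hm; simpa using hm
  | succ k ih =>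
    intro m hm
    rw [pow_succ', mul_smul]
    exact Wn_shift f x hx hf V _ _ (ih m hm)

lemma pow_smul_mem_Wn (V : Submodule R M) (n : ℕ) (v : M) (hv : v ∈ V) :
    x ^ n • v ∈ Wn f x hx hf V (n + 1) := by
  refine Submodule.mem_sup_right ?_
  rw [mem_pull, ← zpow_natCast, ← mul_smul, ← zpow_add]
  simpa using hv

lemma mem_Wn_succ (V : Submodule R M) (n : ℕ) (b : M) (hb : b ∈ Wn f x hx hf V (n + 1)) :
    ∃ v ∈ V, b - x ^ n • v ∈ Wn f x hx hf V n := by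
  obtain ⟨a, ha, c, hc, rfl⟩ := Submodule.mem_sup.1 hb
  rw [mem_pull] at hc
  refine ⟨_, hc, ?_⟩
  rw [← zpow_natCast, ← mul_smul, ← zpow_add]
  simpa using ha

/-- `L n N = {v ∈ V | x ^ n v ∈ N + W n}` as a submodule of `V` -/
def Ln (V N : Submodule R M) (n : ℕ) : Submodule R V :=
  (pull f x hx hf n (N ⊔ Wn f x hx hf V n)).comap V.subtype

lemma mem_Ln {V N : Submodule R M} {n : ℕ} {v : V} :
    v ∈ Ln f x hx hf V N n ↔ x ^ n • (v : M) ∈ N ⊔ Wn f x hx hf V n := by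
  rw [← zpow_natCast]; exact Iff.rfl

lemma Ln_mono_right (V N : Submodule R M) (hN : ∀ m ∈ N, x • m ∈ N) :
    Monotone (Ln f x hx hf V N) := by
  refine monotone_nat_of_le_succ (fun n v hv => ?_)
  rw [mem_Ln] at *
  obtain ⟨a, ha, b, hb, hab⟩ := Submodule.mem_sup.1 hv
  rw [pow_succ', mul_smul, ← hab, smul_add]
  exact Submodule.add_mem_sup (hN a ha) (Wn_shift f x hx hf V n b hb)

lemma Ln_mono_left (V N N' : Submodule R M) (h : N ≤ N') (n : ℕ) :
    Ln f x hx hf V N n ≤ Ln f x hx hf V N' n := by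
  intro v hv
  rw [mem_Ln] at *
  exact sup_le_sup_right h _ hv

lemma le_of_Ln (V N N' : Submodule R M) (h : N ≤ N')
    (hL : ∀ n, Ln f x hx hf V N' n ≤ Ln f x hx hf V N n) (n : ℕ) :
    N' ⊓ Wn f x hx hf V n ≤ N := by
  induction n with
  | zero => simp [Wn]
  | succ n ih =>
    rintro y ⟨hy, hyW⟩
    obtain ⟨v, hv, hw⟩ := mem_Wn_succ f x hx hf V n y hyW
    have h1 : (⟨v, hv⟩ : V) ∈ Ln f x hx hf V N' n := by
      rw [mem_Ln]
      have e : x ^ n • v = y + -(y - x ^ n • v) := by abel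
      rw [e]
      exact Submodule.add_mem_sup hy (neg_mem hw)
    have h2 := hL n h1
    rw [mem_Ln] at h2
    obtain ⟨a, ha, b, hb, hab⟩ := Submodule.mem_sup.1 h2
    have h3 : y - a ∈ N := by
      refine ih ⟨sub_mem hy (h ha), ?_⟩
      have e : y - a = (y - x ^ n • v) + b := by
        have : x ^ n • v = a + b := hab.symm
        rw [this]; abel
      rw [e]; exact add_mem hw hb
    have := add_mem h3 ha
    simpa using this

/-- An `S`-submodule as an `R`-submodule. -/
def resN (hf : ∀ (r : R) (m : M), r • m = f r • m) (N : Submodule S M) : Submodule R M where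
  carrier := N
  zero_mem' := N.zero_mem
  add_mem' := N.add_mem
  smul_mem' := by
    intro r m hm
    rw [hf]; exact N.smul_mem _ hm

lemma noeth_step (V : Submodule R M) [IsNoetherian R V]
    (hcov : ∀ m : M, ∃ k n : ℕ, x ^ k • m ∈ Wn f x hx hf V n) : IsNoetherian S M := by
  rw [← monotone_stabilizes_iff_noetherian]
  intro N
  let L : ℕ → ℕ → Submodule R V := fun k n => Ln f x hx hf V (resN f hf (N k)) n
  have hLk : ∀ n, Monotone fun k => L k n := fun n k k' hk =>
    Ln_mono_left f x hx hf V _ _ (fun m hm => N.mono hk hm) n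
  have hLn : ∀ k, Monotone (L k) := fun k =>
    Ln_mono_right f x hx hf V _ (fun m hm => (N k).smul_mem (x : S) hm)
  have stab := (monotone_stabilizes_iff_noetherian (R := R) (M := V)).2 inferInstance
  obtain ⟨d, hd⟩ := stab ⟨fun k => L k k, fun a b hab => (hLn a hab).trans (hLk b hab)⟩
  choose c hc using fun n => stab ⟨fun k => L k n, hLk n⟩
  let e := d + ∑ i ∈ Finset.range d, c i
  have hce : ∀ i < d, c i ≤ e := fun i hi =>
    (Finset.single_le_sum (f := c) (fun _ _ => Nat.zero_le _) (Finset.mem_range.2 hi)).trans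
      (Nat.le_add_left _ _)
  refine ⟨e, fun m hm => le_antisymm (N.mono hm) ?_⟩
  have hL : ∀ n, L m n ≤ L e n := by
    intro n
    by_cases hn : n < d
    · have h1 := hc n e (hce n hn)
      have h2 := hc n m ((hce n hn).trans hm)
      exact (h2.symm.trans h1).le
    · push Not at hn
      have hde : d ≤ e := Nat.le_add_right _ _
      have h1 : L m n ≤ L (max m n) (max m n) :=
        (hLn m (le_max_right m n)).trans (hLk _ (le_max_left m n))
      have h2 := hd (max m n) (hn.trans (le_max_right _ _))
      have h3 : L d d ≤ L e n := (hLn d hn).trans (hLk n hde)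
      exact h1.trans (h2.symm.le.trans h3)
  intro y hy
  obtain ⟨k, n, hk⟩ := hcov y
  have h1 := le_of_Ln f x hx hf V (resN f hf (N e)) (resN f hf (N m))
    (fun z hz => N.mono hm hz) hL n
    (show x ^ k • y ∈ _ from ⟨(N m).smul_mem ((x ^ k : Sˣ) : S) hy, hk⟩)
  have h2 := (N e).smul_mem (((x ^ k)⁻¹ : Sˣ) : S) h1
  rwa [← Units.smul_def, inv_smul_smul] at h2

/-- The span of all `W n`. -/
def Mplus (V : Submodule R M) : Submodule R M := ⨆ n, Wn f x hx hf V n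

lemma mem_Mplus {V : Submodule R M} {m : M} :
    m ∈ Mplus f x hx hf V ↔ ∃ n, m ∈ Wn f x hx hf V n :=
  Submodule.mem_iSup_of_directed _ (Wn_mono f x hx hf V).directed_le

lemma Mplus_shift {V : Submodule R M} {m : M} (hm : m ∈ Mplus f x hx hf V) (k : ℕ) :
    x ^ k • m ∈ Mplus f x hx hf V := by
  rw [mem_Mplus] at *
  obtain ⟨n, hn⟩ := hm
  exact ⟨_, Wn_shift_pow f x hx hf V n k m hn⟩

lemma Mplus_decomp {V : Submodule R M} {m : M} (hm : m ∈ Mplus f x hx hf V) :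
    ∃ v ∈ V, x⁻¹ • (m - v) ∈ Mplus f x hx hf V := by
  rw [mem_Mplus] at hm
  obtain ⟨n, hn⟩ := hm
  induction n generalizing m with
  | zero =>
    have : m = 0 := by simpa [Wn] using hn
    subst this
    exact ⟨0, zero_mem _, by simp⟩
  | succ n ih =>
    obtain ⟨v, hv, hw⟩ := mem_Wn_succ f x hx hf V n m hn
    obtain ⟨v', hv', hw'⟩ := ih hw
    rcases n with _ | n
    · refine ⟨v + v', add_mem hv hv', ?_⟩
      convert hw' using 2
      simp; abel
    · refine ⟨v', hv', ?_⟩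
      have e : x⁻¹ • (m - v') = x⁻¹ • (m - x ^ (n + 1) • v - v') + x ^ n • v := by
        rw [pow_succ', mul_smul]
        simp only [smul_sub, inv_smul_smul]; abel
      rw [e]
      exact add_mem hw' ((mem_Mplus f x hx hf).2 ⟨_, pow_smul_mem_Wn f x hx hf V n v hv⟩)

/-- multiplication by a unit of `S`, `J`-linear, from an `R`-submodule. -/
def unitMap (V : Submodule R M) (y : Sˣ) : V →ₗ[J] M where
  toFun v := y • (v : M)
  map_add' a b := by simp
  map_smul' j a := by
    simp only [Units.smul_def, RingHom.id_apply]
    rw [Submodule.coe_smul_of_tower, ← algebraMap_smul S j (a : M), ← mul_smul,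
      ← Algebra.commutes, mul_smul, algebraMap_smul]

lemma sep_quot (hR : GP J R) (V : Submodule R M) [Module.Finite R V] (K : Submodule R V) :
    ∃ α : J, α ≠ 0 ∧ ∀ π : J, Prime π → ¬ π ∣ α → SepRel π (K.restrictScalars J) ⊤ := by
  obtain ⟨α, hα, h⟩ := hR.2 (V ⧸ K)
  refine ⟨α, hα, fun π hπ hd => ?_⟩
  refine SepRel.pullback (K.mkQ.restrictScalars J) (fun u => ?_) (h π hπ hd)
  simp

lemma sep_step [IsDomain J] (hR : GP J R) (V : Submodule R M) [Module.Finite R V]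
    (hcov : ∀ m : M, ∃ k n : ℕ, x ^ k • m ∈ Wn f x hx hf V n) :
    ∃ α : J, α ≠ 0 ∧ ∀ π : J, Prime π → ¬ π ∣ α → SepRel π (⊥ : Submodule J M) ⊤ := by
  have := hR.1
  let K : ℕ → Submodule R V := Ln f x hx hf V ⊥
  have hK : Monotone K := Ln_mono_right f x hx hf V ⊥ (by simp)
  obtain ⟨d, hd⟩ := (monotone_stabilizes_iff_noetherian (R := R) (M := V)).2 inferInstance ⟨K, hK⟩
  choose α hα hαs using fun n => sep_quot hR V (K n)
  obtain ⟨β, hβ, hβs⟩ := sep_quot hR V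
    ((pull f x hx hf (-1) (Mplus f x hx hf V)).comap V.subtype)
  refine ⟨(∏ i ∈ Finset.range (d + 1), α i) * β,
    mul_ne_zero (Finset.prod_ne_zero_iff.2 fun i _ => hα i) hβ, fun π hπ hdv => ?_⟩
  have hβ' := hβs π hπ (fun h => hdv (h.mul_left _))
  have hα' : ∀ n, SepRel π ((K n).restrictScalars J) ⊤ := by
    have h0 : ∀ n ≤ d, SepRel π ((K n).restrictScalars J) ⊤ := fun n hn =>
      hαs n π hπ (fun h => hdv ((h.trans
        (Finset.dvd_prod_of_mem α (Finset.mem_range.2 (by omega)))).mul_right _))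
    intro n
    by_cases hn : n ≤ d
    · exact h0 n hn
    · have : K d = K n := hd n (by omega)
      rw [← this]; exact h0 d le_rfl
  -- first filtration
  have s1 : SepRel π (⊥ : Submodule J M) ((Mplus f x hx hf V).restrictScalars J) := by
    have := SepRel.union hπ (fun n => (Wn f x hx hf V n).restrictScalars J)
      (fun a b hab => Wn_mono f x hx hf V hab) (fun n => ?_)
      ((Mplus f x hx hf V).restrictScalars J) (fun c hc => (mem_Mplus f x hx hf).1 hc)
    · simpa [Wn] using this
    · refine SepRel.transfer (unitMap V (x ^ n)) (fun u => ?_) (fun b hb => ?_) (hα' n)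
      · have := mem_Ln f x hx hf (V := V) (N := ⊥) (n := n) (v := u)
        rw [bot_sup_eq] at this
        exact this
      · obtain ⟨v, hv, hw⟩ := mem_Wn_succ f x hx hf V n b hb
        exact ⟨⟨v, hv⟩, hw⟩
  refine s1.trans hπ bot_le ?_
  have := SepRel.union hπ
    (fun k : ℕ => (pull f x hx hf k (Mplus f x hx hf V)).restrictScalars J) ?_ (fun n => ?_)
      ⊤ (fun c _ => ?_)
  · convert this using 1
    ext m
    simp [mem_pull]
  · refine monotone_nat_of_le_succ (fun n m hm => ?_)
    simp only [Submodule.restrictScalars_mem, mem_pull, zpow_natCast] at *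
    rw [pow_succ', mul_smul]
    simpa using Mplus_shift f x hx hf hm 1
  · refine SepRel.transfer (unitMap V (x ^ (-(n + 1) : ℤ))) (fun u => ?_) (fun b hb => ?_) hβ'
    · simp only [Submodule.restrictScalars_mem, Submodule.mem_comap, mem_pull]
      change _ ↔ x ^ (n : ℤ) • x ^ (-(n + 1) : ℤ) • (u : M) ∈ _
      rw [← mul_smul, ← zpow_add]
      have : (n : ℤ) + -(n + 1) = -1 := by ring
      rw [this]; rfl
    · simp only [Submodule.restrictScalars_mem, mem_pull] at hb
      obtain ⟨v, hv, hw⟩ := Mplus_decomp f x hx hf hb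
      refine ⟨⟨v, hv⟩, ?_⟩
      simp only [Submodule.restrictScalars_mem, mem_pull]
      change x ^ (n : ℤ) • (b - x ^ (-(n + 1) : ℤ) • v) ∈ _
      convert hw using 1
      rw [smul_sub, smul_sub, ← mul_smul, ← mul_smul, ← zpow_add, ← zpow_neg_one, ← zpow_add]
      congr 3 <;> (push_cast; ring)
  · obtain ⟨k, n, h⟩ := hcov c
    exact ⟨k, by
      simp only [Submodule.restrictScalars_mem, mem_pull, zpow_natCast]
      exact (mem_Mplus f x hx hf).2 ⟨n, h⟩⟩

lemma cover_step (hS : ∀ s : S, ∃ k : ℕ, ((x ^ k : Sˣ) : S) * s ∈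
      AddSubmonoid.closure (Set.range fun p : ℕ × R => ((x ^ p.1 : Sˣ) : S) * f p.2))
    (T : Set M) (hT : Submodule.span S T = ⊤) (m : M) :
    ∃ k n : ℕ, x ^ k • m ∈ Wn f x hx hf (Submodule.span R T) n := by
  set V := Submodule.span R T
  suffices h : ∃ k : ℕ, x ^ k • m ∈ Mplus f x hx hf V by
    obtain ⟨k, h⟩ := h
    exact ⟨k, (mem_Mplus f x hx hf).1 h⟩
  have hm : m ∈ Submodule.span S T := hT ▸ trivial
  have hadd : ∀ a b : M, (∃ k : ℕ, x ^ k • a ∈ Mplus f x hx hf V) →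
      (∃ k : ℕ, x ^ k • b ∈ Mplus f x hx hf V) → ∃ k : ℕ, x ^ k • (a + b) ∈ Mplus f x hx hf V := by
    rintro a b ⟨k, hk⟩ ⟨l, hl⟩
    refine ⟨k + l, ?_⟩
    rw [smul_add]
    refine add_mem ?_ ?_
    · rw [add_comm, pow_add, mul_smul]; exact Mplus_shift f x hx hf hk l
    · rw [pow_add, mul_smul]; exact Mplus_shift f x hx hf hl k
  have key : ∀ t ∈ T, ∀ s : S, ∃ k : ℕ, x ^ k • (s • t) ∈ Mplus f x hx hf V := by
    intro t ht s
    obtain ⟨k, hk⟩ := hS s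
    refine ⟨k, ?_⟩
    rw [Units.smul_def, ← mul_smul]
    generalize ((x ^ k : Sˣ) : S) * s = y at hk
    induction hk using AddSubmonoid.closure_induction with
    | mem y hy =>
      obtain ⟨⟨i, r⟩, rfl⟩ := hy
      simp only
      rw [mul_smul, ← hf, ← Units.smul_def]
      exact (mem_Mplus f x hx hf).2 ⟨_, pow_smul_mem_Wn f x hx hf V i _
        (V.smul_mem r (Submodule.subset_span ht))⟩
    | zero => simp
    | add a b _ _ ha hb => rw [add_smul]; exact add_mem ha hb
  rw [Submodule.mem_span_set'] at hm
  obtain ⟨n, c, g, rfl⟩ := hm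
  induction (Finset.univ : Finset (Fin n)) using Finset.induction_on with
  | empty => exact ⟨0, by simp⟩
  | insert i s hi ih =>
    rw [Finset.sum_insert hi]
    exact hadd _ _ (key _ (g i).2 _) ih

end step

theorem GP_step {J R S : Type} [CommRing J] [IsDomain J] [Ring R] [Ring S] [Algebra J R]
    [Algebra J S] (f : R →ₐ[J] S) (x : Sˣ) (hx : ∀ (n : ℤ) (r : R), ∃ r' : R,
      ((x ^ n : Sˣ) : S) * f r = f r' * ((x ^ n : Sˣ) : S))
    (hS : ∀ s : S, ∃ k : ℕ, ((x ^ k : Sˣ) : S) * s ∈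
      AddSubmonoid.closure (Set.range fun p : ℕ × R => ((x ^ p.1 : Sˣ) : S) * f p.2))
    (hR : GP J R) : GP J S := by
  have := hR.1
  constructor
  · letI : Module R S := Module.compHom S (f : R →+* S)
    have hf : ∀ (r : R) (m : S), r • m = f r • m := fun _ _ => rfl
    haveI : IsScalarTower J R S := ⟨fun j r m => by
      rw [hf, hf, map_smul, smul_assoc]⟩
    haveI : IsNoetherian R (Submodule.span R ({1} : Set S)) :=
      isNoetherian_span_of_finite R (Set.finite_singleton _)
    exact noeth_step f x hx hf (Submodule.span R ({1} : Set S))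
      (cover_step f x hx hf hS _ (by
        rw [eq_top_iff]; intro s _
        exact Submodule.mem_span_singleton.2 ⟨s, by simp⟩))
  · intro M _ _ _ _ hfin
    letI : Module R M := Module.compHom M (f : R →+* S)
    have hf : ∀ (r : R) (m : M), r • m = f r • m := fun _ _ => rfl
    haveI : IsScalarTower J R M := ⟨fun j r m => by
      rw [hf, hf, map_smul, smul_assoc]⟩
    obtain ⟨T, hT⟩ := hfin.fg_top
    haveI : Module.Finite R (Submodule.span R (T : Set M)) :=
      Module.Finite.span_of_finite R T.finite_toSet
    exact sep_step f x hx hf hR (Submodule.span R (T : Set M)) (cover_step f x hx hf hS _ hT)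

/-! Polycyclic series -/
inductive PolyC {G : Type} [Group G] : Subgroup G → Prop
  | bot : PolyC ⊥
  | step (H : Subgroup G) (x : G) : PolyC H → (∀ h ∈ H, x * h * x⁻¹ ∈ H) →
      (∀ h ∈ H, x⁻¹ * h * x ∈ H) → PolyC (H ⊔ Subgroup.zpowers x)

section group
open scoped commutatorElement
variable {G : Type} [Group G]

lemma conj_zpow_mem {H : Subgroup G} {x : G} (h1 : ∀ h ∈ H, x * h * x⁻¹ ∈ H)
    (h2 : ∀ h ∈ H, x⁻¹ * h * x ∈ H) (n : ℤ) : ∀ h ∈ H, x ^ n * h * (x ^ n)⁻¹ ∈ H := by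
  have hx : x ∈ Subgroup.normalizer (H : Set G) := by
    rw [Subgroup.mem_normalizer_iff]
    intro h
    refine ⟨h1 h, fun hh => ?_⟩
    have := h2 _ hh
    simpa [mul_assoc] using this
  intro h hh
  exact (Subgroup.mem_normalizer_iff.1 (zpow_mem hx n) h).1 hh

lemma mem_sup_zpowers {H : Subgroup G} {x : G} (h1 : ∀ h ∈ H, x * h * x⁻¹ ∈ H)
    (h2 : ∀ h ∈ H, x⁻¹ * h * x ∈ H) {g : G} (hg : g ∈ H ⊔ Subgroup.zpowers x) :
    ∃ n : ℤ, ∃ h ∈ H, g = x ^ n * h := by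
  rw [Subgroup.sup_eq_closure] at hg
  induction hg using Subgroup.closure_induction with
  | mem y hy =>
    rcases hy with hy | hy
    · exact ⟨0, y, hy, by simp⟩
    · obtain ⟨n, rfl⟩ := hy
      exact ⟨n, 1, H.one_mem, by simp⟩
  | one => exact ⟨0, 1, H.one_mem, by simp⟩
  | mul a b _ _ ha hb =>
    obtain ⟨n, h, hh, rfl⟩ := ha
    obtain ⟨m, k, hk, rfl⟩ := hb
    refine ⟨n + m, (x ^ (-m) * h * (x ^ (-m))⁻¹) * k,
      H.mul_mem (conj_zpow_mem h1 h2 _ h hh) hk, ?_⟩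
    simp only [zpow_add, zpow_neg]; group
  | inv a _ ha =>
    obtain ⟨n, h, hh, rfl⟩ := ha
    refine ⟨-n, x ^ n * h⁻¹ * (x ^ n)⁻¹, conj_zpow_mem h1 h2 _ _ (H.inv_mem hh), ?_⟩
    group

lemma PolyC.finite_of_torsion {H : Subgroup G} (hH : PolyC H) (ht : ∀ g : G, IsOfFinOrder g) :
    (H : Set G).Finite := by
  induction hH with
  | bot => simp
  | step H x _ h1 h2 ih =>
    have hz : ((Subgroup.zpowers x : Subgroup G) : Set G).Finite := by
      exact finite_zpowers.2 (ht x)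
    refine (hz.mul ih).subset ?_
    intro g hg
    obtain ⟨n, h, hh, rfl⟩ := mem_sup_zpowers h1 h2 hg
    exact Set.mul_mem_mul ⟨n, rfl⟩ hh

/-- if `T` generates `γ_n` modulo `γ_{n+1}` finite, then likewise for the next. -/
lemma lcs_gen [Group.FG G] (n : ℕ) : ∃ T : Set G, T.Finite ∧
    (⊤ : Subgroup G).lowerCentralSeries n =
      Subgroup.closure T ⊔ (⊤ : Subgroup G).lowerCentralSeries (n + 1) := by
  obtain ⟨S, hS, hSf⟩ := (Group.fg_iff (G := G)).1 inferInstance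
  induction n with
  | zero => exact ⟨S, hSf, by rw [hS]; simp [Subgroup.lowerCentralSeries_zero]⟩
  | succ n ih =>
    obtain ⟨T, hT, hTn⟩ := ih
    set γ := (⊤ : Subgroup G).lowerCentralSeries with hγ
    have hγs : ∀ n, γ (n + 1) = ⁅γ n, ⊤⁆ := fun n => Subgroup.lowerCentralSeries_succ _ n
    let T' : Set G := Set.image2 (fun t s => ⁅t, s⁆) T S
    refine ⟨T', hT.image2 _ hSf, ?_⟩
    have hTγ : T ⊆ γ n := by
      rw [hTn]; exact Subgroup.subset_closure.trans (SetLike.coe_subset_coe.2 le_sup_left)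
    have hT'γ : T' ⊆ γ (n + 1) := by
      rintro _ ⟨t, ht, s, hs, rfl⟩
      rw [hγs]; exact Subgroup.commutator_mem_commutator (hTγ ht) trivial
    set N := Subgroup.closure T' ⊔ γ (n + 2) with hN
    have hanti : γ (n + 2) ≤ γ (n + 1) := Subgroup.lowerCentralSeries_antitone _ (Nat.le_succ _)
    have hNγ : N ≤ γ (n + 1) := sup_le ((Subgroup.closure_le _).2 hT'γ) hanti
    have hcomm : ∀ a ∈ γ (n + 1), ∀ g : G, ⁅a, g⁆ ∈ N := fun a ha g =>
      (le_sup_right : γ (n + 2) ≤ N) (by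
        rw [hγs (n + 1)]; exact Subgroup.commutator_mem_commutator ha (Subgroup.mem_top _))
    have hNn : N.Normal := ⟨fun a ha g => by
      have := hcomm a (hNγ ha) g
      have h2 := N.mul_mem (N.inv_mem this) ha
      have h3 : ⁅a, g⁆⁻¹ * a = g * a * g⁻¹ := by
        rw [commutatorElement_def]; group
      rwa [h3] at h2⟩
    refine le_antisymm ?_ hNγ
    let C : Subgroup G := (Subgroup.center (G ⧸ N)).comap (QuotientGroup.mk' N)
    have memC : ∀ a, a ∈ C ↔ ∀ g, ⁅a, g⁆ ∈ N := by
      intro a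
      simp only [C, Subgroup.mem_comap, Subgroup.mem_center_iff]
      constructor
      · intro h g
        have := h (QuotientGroup.mk' N g)
        rw [← QuotientGroup.ker_mk' N, MonoidHom.mem_ker, map_commutatorElement,
          commutatorElement_eq_one_iff_mul_comm]
        exact this.symm
      · intro h g
        obtain ⟨g, rfl⟩ := QuotientGroup.mk'_surjective N g
        have := h g
        rw [← QuotientGroup.ker_mk' N, MonoidHom.mem_ker, map_commutatorElement,
          commutatorElement_eq_one_iff_mul_comm] at this
        exact this.symm
    have hC : γ n ≤ C := by
      rw [hTn]
      refine sup_le ((Subgroup.closure_le _).2 fun t ht => ?_) (fun a ha => (memC a).2 (hcomm a ha))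
      refine (memC t).2 ?_
      let D : Subgroup G := (Subgroup.centralizer {QuotientGroup.mk' N t}).comap
        (QuotientGroup.mk' N)
      have hD : ∀ g, g ∈ D ↔ ⁅t, g⁆ ∈ N := by
        intro g
        rw [← QuotientGroup.ker_mk' N, MonoidHom.mem_ker, map_commutatorElement,
          commutatorElement_eq_one_iff_mul_comm, Subgroup.mem_comap,
          Subgroup.mem_centralizer_singleton_iff]
        exact eq_comm
      have : D = ⊤ := by
        rw [eq_top_iff, ← hS, Subgroup.closure_le]
        intro s hs
        exact (hD s).2 ((le_sup_left : _ ≤ N) (Subgroup.subset_closure ⟨t, ht, s, hs, rfl⟩))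
      intro g
      exact (hD g).1 (this ▸ trivial)
    rw [hγs, Subgroup.commutator_le]
    intro a ha g _
    exact (memC a).1 (hC ha) g

lemma polyC_top [Group.FG G] [Group.IsNilpotent G] : PolyC (⊤ : Subgroup G) := by
  obtain ⟨n, hn⟩ := Subgroup.nilpotent_iff_lowerCentralSeries.1 (inferInstance : Group.IsNilpotent G)
  set γ := (⊤ : Subgroup G).lowerCentralSeries with hγ
  have hγs : ∀ n, γ (n + 1) = ⁅γ n, ⊤⁆ := fun n => Subgroup.lowerCentralSeries_succ _ n
  have key : ∀ k, PolyC (γ (k + 1)) → PolyC (γ k) := by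
    intro k hk
    obtain ⟨T, hT, hTk⟩ := lcs_gen (G := G) k
    have hTγ : T ⊆ γ k := by
      rw [hγ, hTk]; exact Subgroup.subset_closure.trans (SetLike.coe_subset_coe.2 le_sup_left)
    have hle : γ (k + 1) ≤ γ k := Subgroup.lowerCentralSeries_antitone _ (Nat.le_succ _)
    rw [hγ, hTk]
    clear hTk
    induction T, hT using Set.Finite.induction_on with
    | empty => rw [Subgroup.closure_empty, bot_sup_eq]; exact hk
    | @insert x T _ _ ih =>
      have ih' := ih ((Set.subset_insert _ _).trans hTγ)
      have hx : x ∈ γ k := hTγ (Set.mem_insert _ _)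
      set H := Subgroup.closure T ⊔ γ (k + 1) with hH
      have hHk : H ≤ γ k := sup_le ((Subgroup.closure_le _).2
        ((Set.subset_insert _ _).trans hTγ)) hle
      have e : Subgroup.closure (insert x T) ⊔ γ (k + 1) = H ⊔ Subgroup.zpowers x := by
        rw [Set.insert_eq, Subgroup.closure_union, ← Subgroup.zpowers_eq_closure, hH, sup_assoc,
          sup_comm]
      rw [e]
      have conj : ∀ y ∈ γ k, ∀ h ∈ H, y * h * y⁻¹ ∈ H := by
        intro y hy h hh
        have h1 : ⁅y, h⁆ ∈ H := (le_sup_right : γ (k + 1) ≤ H) (by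
          rw [hγs]; exact Subgroup.commutator_mem_commutator hy (Subgroup.mem_top _))
        have := H.mul_mem h1 hh
        rw [commutatorElement_def] at this
        simpa [mul_assoc] using this
      exact PolyC.step H x ih' (conj x hx) (fun h hh => by
        simpa using conj x⁻¹ (inv_mem hx) h hh)
  have : ∀ j, PolyC (γ (n - j)) := by
    intro j
    induction j with
    | zero => rw [Nat.sub_zero, hn]; exact PolyC.bot
    | succ j ih =>
      by_cases h : n ≤ j
      · have : n - (j + 1) = n - j := by omega
        rwa [this]
      · exact key _ (by
          have : n - (j + 1) + 1 = n - j := by omega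
          rwa [this])
  simpa [hγ, Subgroup.lowerCentralSeries_zero] using this n

/-- A f.g. nilpotent group with torsion center is torsion. -/
lemma torsion_of_center [Group.FG G] [Group.IsNilpotent G]
    (hc : ∀ z ∈ Subgroup.center G, IsOfFinOrder z) (g : G) : IsOfFinOrder g := by
  obtain ⟨S, hS, hSf⟩ := (Group.fg_iff (G := G)).1 inferInstance
  let Z := Subgroup.upperCentralSeries G
  have step : ∀ i, ∀ g ∈ Z (i + 1), ∃ m : ℕ, 0 < m ∧ g ^ m ∈ Z i := by
    intro i
    induction i with
    | zero =>
      intro g hg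
      rw [show Z (0 + 1) = Subgroup.center G from Subgroup.upperCentralSeries_one G] at hg
      obtain ⟨m, hm, h⟩ := (isOfFinOrder_iff_pow_eq_one).1 (hc g hg)
      exact ⟨m, hm, by rw [h]; exact one_mem _⟩
    | succ i ih =>
      intro g hg
      have hgs : ∀ s, ⁅g, s⁆ ∈ Z (i + 1) := fun s => by
        have := (Subgroup.mem_upperCentralSeries_succ_iff).1 hg s
        rw [commutatorElement_def]; exact this
      choose m hm hmz using fun s => ih _ (hgs s)
      let q := QuotientGroup.mk' (Z i)
      have memZ : ∀ a, a ∈ Z i ↔ q a = 1 := fun a => by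
        rw [← MonoidHom.mem_ker, QuotientGroup.ker_mk']
      have hcent : ∀ a ∈ Z (i + 1), ∀ b, Commute (q a) (q b) := by
        intro a ha b
        have := (Subgroup.mem_upperCentralSeries_succ_iff).1 ha b
        rw [memZ, map_commutatorElement,
          commutatorElement_eq_one_iff_commute] at this
        exact this
      have hcent' : ∀ a, (∀ b, Commute (q a) (q b)) → a ∈ Z (i + 1) := by
        intro a h
        refine (Subgroup.mem_upperCentralSeries_succ_iff).2 (fun b => ?_)
        rw [memZ, map_commutatorElement,
          commutatorElement_eq_one_iff_commute]
        exact h b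
      let n := ∏ s ∈ hSf.toFinset, m s
      refine ⟨n, Finset.prod_pos fun s _ => hm s, hcent' _ ?_⟩
      have hSn : ∀ s ∈ S, Commute (q (g ^ n)) (q s) := by
        intro s hs
        have h1 : (q ⁅g, s⁆) ^ n = 1 := by
          obtain ⟨k, hk⟩ : m s ∣ n := Finset.dvd_prod_of_mem m (hSf.mem_toFinset.2 hs)
          rw [hk, pow_mul, ← map_pow, (memZ _).1 (hmz s), one_pow]
        have h2 : q s * q g * (q s)⁻¹ = (q ⁅g, s⁆)⁻¹ * q g := by
          rw [map_commutatorElement, commutatorElement_def]; group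
        have h3 : q s * (q g) ^ n * (q s)⁻¹ = (q g) ^ n := by
          rw [← conj_pow, h2, (((hcent _ (hgs s) g)).inv_left).mul_pow, inv_pow, h1]; simp
        rw [map_pow]
        exact (mul_inv_eq_iff_eq_mul.1 h3).symm
      intro b
      let D : Subgroup G := (Subgroup.centralizer {q (g ^ n)}).comap q
      have hD : D = ⊤ := by
        rw [eq_top_iff, ← hS, Subgroup.closure_le]
        intro s hs
        refine Subgroup.mem_centralizer_singleton_iff.2 ?_
        exact (hSn s hs).symm
      have hb : b ∈ D := hD ▸ trivial
      exact (Subgroup.mem_centralizer_singleton_iff.1 hb).symm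
  have fin : ∀ i, ∀ g ∈ Z i, IsOfFinOrder g := by
    intro i
    induction i with
    | zero => 
      intro g hg
      have : g = 1 := by simpa [Z] using hg
      rw [this]; exact IsOfFinOrder.one
    | succ i ih =>
      intro g hg
      obtain ⟨m, hm, h⟩ := step i g hg
      exact (ih _ h).of_pow hm.ne'
  obtain ⟨n, hn⟩ := Group.IsNilpotent.nilpotent G
  exact fin n g (by show g ∈ Subgroup.upperCentralSeries G n; rw [hn]; trivial)

end group

/-! group rings -/
lemma single_smul_closed {J G M : Type} [CommRing J] [Group G] [AddCommGroup M]
    [Module (MonoidAlgebra J G) M] (N : AddSubgroup M)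
    (hN : ∀ (g : G) (j : J), ∀ m ∈ N, (MonoidAlgebra.single g j : MonoidAlgebra J G) • m ∈ N)
    (a : MonoidAlgebra J G) (m : M) (hm : m ∈ N) : a • m ∈ N := by
  induction a using MonoidAlgebra.induction_linear with
  | zero => simp
  | add a b ha hb => rw [add_smul]; exact N.add_mem ha hb
  | single g j => exact hN g j m hm

lemma GP_group_step {J H K : Type} [CommRing J] [IsDomain J] [Group H] [Group K] (i : H →* K)
    (x : K) (hn : ∀ (n : ℤ) (h : H), ∃ h' : H, x ^ n * i h = i h' * x ^ n)
    (hK : ∀ k : K, ∃ (n : ℤ) (h : H), k = x ^ n * i h) (hH : GP J (MonoidAlgebra J H)) :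
    GP J (MonoidAlgebra J K) := by
  let f : MonoidAlgebra J H →ₐ[J] MonoidAlgebra J K := MonoidAlgebra.mapDomainAlgHom J J i
  have hfs : ∀ h j, f (MonoidAlgebra.single h j) = MonoidAlgebra.single (i h) j := fun h j => by
    simp [f]
  let u : (MonoidAlgebra J K)ˣ := Units.map (MonoidAlgebra.of J K) (toUnits x)
  have hu : ∀ n : ℤ, ((u ^ n : (MonoidAlgebra J K)ˣ) : MonoidAlgebra J K)
      = MonoidAlgebra.single (x ^ n) 1 := by
    intro n
    have : u ^ n = Units.map (MonoidAlgebra.of J K) (toUnits (x ^ n)) := by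
      simp only [u, map_zpow]
    rw [this]; rfl
  have hu' : ∀ n : ℕ, ((u ^ n : (MonoidAlgebra J K)ˣ) : MonoidAlgebra J K)
      = MonoidAlgebra.single (x ^ n) 1 := by
    intro n
    have := hu n
    simpa using this
  refine GP_step f u ?_ ?_ hH
  · intro n r
    induction r using MonoidAlgebra.induction_linear with
    | zero => exact ⟨0, by simp⟩
    | add a b ha hb =>
      obtain ⟨a', ha'⟩ := ha
      obtain ⟨b', hb'⟩ := hb
      exact ⟨a' + b', by rw [map_add, map_add, mul_add, add_mul, ha', hb']⟩
    | single h j =>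
      obtain ⟨h', hh'⟩ := hn n h
      refine ⟨MonoidAlgebra.single h' j, ?_⟩
      rw [hfs, hfs, hu, MonoidAlgebra.single_mul_single, MonoidAlgebra.single_mul_single, hh']
      simp
  · have mono : ∀ (k l : ℕ) (s : MonoidAlgebra J K),
        s ∈ AddSubmonoid.closure (Set.range fun p : ℕ × MonoidAlgebra J H =>
          ((u ^ p.1 : (MonoidAlgebra J K)ˣ) : MonoidAlgebra J K) * f p.2) →
        ((u ^ k : (MonoidAlgebra J K)ˣ) : MonoidAlgebra J K) * s ∈
          AddSubmonoid.closure (Set.range fun p : ℕ × MonoidAlgebra J H =>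
          ((u ^ p.1 : (MonoidAlgebra J K)ˣ) : MonoidAlgebra J K) * f p.2) := by
      intro k l s hs
      induction hs using AddSubmonoid.closure_induction with
      | mem y hy =>
        obtain ⟨⟨n, r⟩, rfl⟩ := hy
        refine AddSubmonoid.subset_closure ⟨(k + n, r), ?_⟩
        simp only [pow_add, Units.val_mul, mul_assoc]
      | zero => simp
      | add a b _ _ ha hb => rw [mul_add]; exact add_mem ha hb
    intro s
    induction s using MonoidAlgebra.induction_linear with
    | zero => exact ⟨0, by simp⟩
    | add a b ha hb =>
      obtain ⟨k, hk⟩ := ha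
      obtain ⟨l, hl⟩ := hb
      refine ⟨k + l, ?_⟩
      rw [mul_add]
      refine add_mem ?_ ?_
      · rw [add_comm, pow_add, Units.val_mul, mul_assoc]; exact mono _ 0 _ hk
      · rw [pow_add, Units.val_mul, mul_assoc]; exact mono _ 0 _ hl
    | single k j =>
      obtain ⟨n, h, rfl⟩ := hK k
      obtain ⟨m, hm⟩ : ∃ m : ℕ, (m : ℤ) = n.natAbs + n := ⟨(n.natAbs + n).toNat, by omega⟩
      refine ⟨n.natAbs, AddSubmonoid.subset_closure ⟨(m, MonoidAlgebra.single h j), ?_⟩⟩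
      simp only
      rw [hfs, hu', hu', MonoidAlgebra.single_mul_single, MonoidAlgebra.single_mul_single,
        ← mul_assoc, ← zpow_natCast, ← zpow_natCast, hm, zpow_add]

lemma GP_poly (J : Type) [CommRing J] [IsDomain J] [IsNoetherianRing J] {G : Type} [Group G]
    {H : Subgroup G} (hH : PolyC H) : GP J (MonoidAlgebra J H) := by
  induction hH with
  | bot =>
    refine GP_step (Algebra.ofId J _) 1 (fun n r => ⟨r, by simp⟩) (fun s => ⟨0, ?_⟩) (GP_base J)
    rw [pow_zero, Units.val_one, one_mul]
    induction s using MonoidAlgebra.induction_linear with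
    | zero => exact zero_mem _
    | add a b ha hb => exact add_mem ha hb
    | single g j =>
      refine AddSubmonoid.subset_closure ⟨(0, j), ?_⟩
      have : g = 1 := Subsingleton.elim _ _
      subst this
      simp [Algebra.ofId_apply]
  | step H x _ h1 h2 ih =>
    refine GP_group_step (Subgroup.inclusion (le_sup_left : H ≤ H ⊔ Subgroup.zpowers x))
      ⟨x, (le_sup_right : Subgroup.zpowers x ≤ _) (Subgroup.mem_zpowers x)⟩ ?_ ?_ ih
    · intro n h
      refine ⟨⟨x ^ n * h * (x ^ n)⁻¹, conj_zpow_mem h1 h2 n _ h.2⟩, ?_⟩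
      ext; simp
    · intro k
      obtain ⟨n, h, hh, e⟩ := mem_sup_zpowers h1 h2 k.2
      exact ⟨n, ⟨h, hh⟩, by ext; simpa using e⟩

lemma GP_nilpotent (J : Type) [CommRing J] [IsDomain J] [IsNoetherianRing J] (G : Type) [Group G]
    [Group.FG G] [Group.IsNilpotent G] : GP J (MonoidAlgebra J G) :=
  GP_group_step (Subgroup.subtype ⊤) 1 (fun n h => ⟨h, by simp⟩)
    (fun k => ⟨0, ⟨k, trivial⟩, by simp⟩) (GP_poly J polyC_top)

lemma no_divisible {J : Type} [CommRing J] [IsDomain J] [IsNoetherianRing J]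
    (hJ : ∀ α : J, α ≠ 0 → ∃ π : J, Prime π ∧ ¬ π ∣ α) {G : Type} [Group G]
    [Group.FG G] [Group.IsNilpotent G] (V : Type) [AddCommGroup V] [Module J V]
    [Module (MonoidAlgebra J G) V] [IsScalarTower J (MonoidAlgebra J G) V]
    [Module.Finite (MonoidAlgebra J G) V] [Nontrivial V]
    (hV : ∀ j : J, j ≠ 0 → Function.Bijective fun v : V => j • v) : False := by
  obtain ⟨α, hα, h⟩ := (GP_nilpotent J G).2 V
  obtain ⟨π, hπ, hd⟩ := hJ α hα
  obtain ⟨v, hv⟩ := exists_ne (0 : V)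
  obtain ⟨s, hs, h0⟩ := (h π hπ hd).2 v trivial (fun n => by
    obtain ⟨u, hu⟩ := (hV (π ^ n) (pow_ne_zero _ hπ.ne_zero)).2 v
    refine ⟨1, hπ.not_dvd_one, u, trivial, ?_⟩
    simp only at hu
    simp [hu])
  have hs0 : s ≠ 0 := by rintro rfl; simp at hs
  exact hv ((hV s hs0).1 (by simpa using h0))

lemma schurJ {J : Type} [CommRing J] [IsDomain J] [IsNoetherianRing J]
    (hJ : ∀ α : J, α ≠ 0 → ∃ π : J, Prime π ∧ ¬ π ∣ α) {G : Type} [Group G]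
    [Group.FG G] [Group.IsNilpotent G] (V : Type) [AddCommGroup V]
    [Module (MonoidAlgebra ℤ G) V] [IsSimpleModule (MonoidAlgebra ℤ G) V]
    (θ : J →+* Module.End (MonoidAlgebra ℤ G) V) : ∃ j : J, j ≠ 0 ∧ θ j = 0 := by
  by_contra hcon
  push Not at hcon
  let _ : Module J V := Module.compHom V θ
  have hJV : ∀ (j : J) (v : V), j • v = θ j v := fun _ _ => rfl
  let ρ : G →* Module.End J V :=
    { toFun := fun g =>
        { toFun := fun v => (MonoidAlgebra.single g 1 : MonoidAlgebra ℤ G) • v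
          map_add' := fun a b => smul_add _ _ _
          map_smul' := fun j v => by simp only [hJV, map_smul, RingHom.id_apply] }
      map_one' := by
        ext v
        change (MonoidAlgebra.single 1 1 : MonoidAlgebra ℤ G) • v = v
        rw [← MonoidAlgebra.one_def, one_smul]
      map_mul' := fun g h => by
        ext v
        change (MonoidAlgebra.single (g * h) 1 : MonoidAlgebra ℤ G) • v =
          (MonoidAlgebra.single g 1 : MonoidAlgebra ℤ G) •
            (MonoidAlgebra.single h 1 : MonoidAlgebra ℤ G) • v
        rw [← mul_smul, MonoidAlgebra.single_mul_single, one_mul] }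
  have hρ : ∀ g v, ρ g v = (MonoidAlgebra.single g 1 : MonoidAlgebra ℤ G) • v := fun _ _ => rfl
  let F : MonoidAlgebra J G →ₐ[J] Module.End J V := MonoidAlgebra.lift J (Module.End J V) G ρ
  have hFs : ∀ g, F (MonoidAlgebra.single g 1) = ρ g := fun g => by simp [F]
  let _ : Module (MonoidAlgebra J G) V := Module.compHom V F.toRingHom
  have hFV : ∀ (a : MonoidAlgebra J G) (v : V), a • v = F a v := fun _ _ => rfl
  have : IsScalarTower J (MonoidAlgebra J G) V := ⟨fun j a v => by
    rw [hFV, hFV, map_smul]; rfl⟩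
  have hnt : Nontrivial V := IsSimpleModule.nontrivial (MonoidAlgebra ℤ G) V
  have hfin : Module.Finite (MonoidAlgebra J G) V := by
    obtain ⟨v, hv⟩ := exists_ne (0 : V)
    refine ⟨⟨{v}, ?_⟩⟩
    rw [Finset.coe_singleton]
    set N := Submodule.span (MonoidAlgebra J G) ({v} : Set V)
    let N' : Submodule (MonoidAlgebra ℤ G) V :=
      { N.toAddSubmonoid with
        smul_mem' := fun a m hm => by
          refine single_smul_closed N.toAddSubgroup (fun g j m hm => ?_) a m hm
          have e : (MonoidAlgebra.single g j : MonoidAlgebra ℤ G)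
              = j • MonoidAlgebra.single g 1 := by simp
          rw [e, smul_assoc]
          refine zsmul_mem ?_ j
          have := N.smul_mem (MonoidAlgebra.single g 1) hm
          rwa [hFV, hFs] at this }
    have hv' : v ∈ N' := Submodule.mem_span_singleton_self (R := MonoidAlgebra J G) v
    have hN' : N' = ⊤ := (eq_bot_or_eq_top N').resolve_left (fun h => by
      rw [h] at hv'; exact hv (by simpa using hv'))
    rw [eq_top_iff]
    intro w _
    have : w ∈ N' := hN' ▸ trivial
    exact this
  refine no_divisible hJ (G := G) V (fun j hj => ?_)
  exact (LinearMap.bijective_or_eq_zero (θ j)).resolve_right (hcon j hj)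

lemma primes_int (α : ℤ) (hα : α ≠ 0) : ∃ π : ℤ, Prime π ∧ ¬ π ∣ α := by
  obtain ⟨p, hp, hpp⟩ := Nat.exists_infinite_primes (α.natAbs + 1)
  refine ⟨p, Nat.prime_iff_prime_int.1 hpp, fun h => ?_⟩
  have := Nat.le_of_dvd (Int.natAbs_pos.2 hα) (Int.natCast_dvd.1 h)
  omega

open Polynomial in
lemma primes_poly {k : Type} [Field k] (α : k[X]) (hα : α ≠ 0) :
    ∃ π : k[X], Prime π ∧ ¬ π ∣ α := by
  have hu : ¬ IsUnit (X * α + 1) := by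
    intro h
    have h1 := natDegree_eq_zero_of_isUnit h
    have h2 : (X * α + 1 : k[X]).natDegree = (X * α).natDegree := by
      rw [← C_1, natDegree_add_C]
    rw [h2, natDegree_X_mul hα] at h1
    omega
  obtain ⟨π, hπ, hd⟩ := WfDvdMonoid.exists_irreducible_factor hu (by
    intro h
    have h2 := congrArg (Polynomial.eval 0) h
    simp at h2)
  refine ⟨π, hπ.prime, fun h => hπ.not_isUnit ?_⟩
  exact isUnit_of_dvd_one ((dvd_add_right (h.mul_left X)).1 hd)

lemma finite_order {A E : Type} [CommRing A] [Finite A] [Ring E] [Algebra A E] (φ : E)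
    (hu : IsUnit φ) (hi : IsIntegral A φ) : ∃ m : ℕ, 0 < m ∧ φ ^ m = 1 := by
  have hfg := hi.fg_adjoin_singleton
  have : Module.Finite A (Algebra.adjoin A ({φ} : Set E)) := Module.Finite.iff_fg.2 hfg
  have : Finite (Algebra.adjoin A ({φ} : Set E)) := Module.finite_of_finite A
  let g : ℕ → Algebra.adjoin A ({φ} : Set E) := fun n =>
    ⟨φ ^ n, pow_mem (Algebra.self_mem_adjoin_singleton A φ) n⟩
  obtain ⟨a, b, hab, h⟩ := Finite.exists_ne_map_eq_of_infinite g
  have h' : φ ^ a = φ ^ b := congrArg Subtype.val h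
  have key : ∀ a b : ℕ, a < b → φ ^ a = φ ^ b → ∃ m : ℕ, 0 < m ∧ φ ^ m = 1 := by
    intro a b hlt h
    refine ⟨b - a, by omega, ?_⟩
    have h2 : φ ^ a * φ ^ (b - a) = φ ^ a * 1 := by
      rw [← pow_add, mul_one, h]; congr 1; omega
    exact (hu.pow a).mul_left_cancel h2
  rcases lt_or_gt_of_ne hab with hlt | hlt
  · exact key a b hlt h'
  · exact key b a hlt h'.symm

/-- endomorphisms of simple modules have finite order, and the characteristic is finite -/
lemma simple_end {G : Type} [Group G] [Group.FG G] [Group.IsNilpotent G] (V : Type)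
    [AddCommGroup V] [Module (MonoidAlgebra ℤ G) V] [IsSimpleModule (MonoidAlgebra ℤ G) V] :
    (∃ n : ℕ, 0 < n ∧ ∀ v : V, n • v = 0) ∧
    ∀ φ : Module.End (MonoidAlgebra ℤ G) V, φ ≠ 0 → ∃ m : ℕ, 0 < m ∧ φ ^ m = 1 := by
  classical
  have hnt : Nontrivial V := IsSimpleModule.nontrivial (MonoidAlgebra ℤ G) V
  obtain ⟨j, hj, hj0⟩ := schurJ primes_int V (Int.castRingHom (Module.End (MonoidAlgebra ℤ G) V))
  let c := ringChar (Module.End (MonoidAlgebra ℤ G) V)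
  have hc : c ≠ 0 := by
    intro h
    have h2 := (CharP.intCast_eq_zero_iff (Module.End (MonoidAlgebra ℤ G) V) c j).1 hj0
    rw [h] at h2
    exact hj (by simpa using h2)
  have hp : c.Prime :=
    (CharP.char_is_prime_or_zero (Module.End (MonoidAlgebra ℤ G) V) c).resolve_right hc
  have : Fact c.Prime := ⟨hp⟩
  constructor
  · refine ⟨c, hp.pos, fun v => ?_⟩
    have h0 : (c : Module.End (MonoidAlgebra ℤ G) V) = 0 := CharP.cast_eq_zero _ c
    rw [← Module.End.natCast_apply (R := MonoidAlgebra ℤ G) c v, h0, LinearMap.zero_apply]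
  · intro φ hφ
    let _ : Algebra (ZMod c) (Module.End (MonoidAlgebra ℤ G) V) := ZMod.algebra _ c
    obtain ⟨f, hf, hf0⟩ := schurJ primes_poly V (Polynomial.aeval (R := ZMod c) φ).toRingHom
    have hi : IsIntegral (ZMod c) φ := IsAlgebraic.isIntegral ⟨f, hf, hf0⟩
    exact finite_order φ ((Module.End.isUnit_iff φ).2
      ((LinearMap.bijective_or_eq_zero φ).resolve_right hφ)) hi

theorem endMul_apply {M : Type*} [AddCommGroup M] (u v : AddMonoid.End M) (m : M) :
    (u * v) m = u (v m) := rfl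


lemma nilp_of_kill {A M : Type} [Ring A] [AddCommGroup M] [Module A M] [IsNoetherian A M]
    (a : M) (ha : a ≠ 0) (hmono : ∀ N : Submodule A M, N ≠ ⊥ → a ∈ N) (ψ : Module.End A M)
    (h : ψ a = 0) : ∃ k : ℕ, ψ ^ k = 0 := by
  obtain ⟨n, hn⟩ := Filter.eventually_atTop.1 ψ.eventually_disjoint_ker_pow_range_pow
  have hd := hn (n + 1) (Nat.le_succ _)
  refine ⟨n + 1, ?_⟩
  by_contra hne
  have h1 : a ∈ LinearMap.range (ψ ^ (n + 1)) := hmono _ (fun h => hne (LinearMap.range_eq_bot.1 h))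
  have h2 : a ∈ LinearMap.ker (ψ ^ (n + 1)) := by
    rw [LinearMap.mem_ker, pow_succ, Module.End.mul_apply, h, map_zero]
  exact ha (by simpa using hd.le_bot ⟨h2, h1⟩)

lemma monolith_finite {G : Type} [Group G] [Group.FG G] [Group.IsNilpotent G] (M : Type)
    [AddCommGroup M] [Module (MonoidAlgebra ℤ G) M] [Module.Finite (MonoidAlgebra ℤ G) M]
    (a : M) (ha : a ≠ 0) (hmono : ∀ N : Submodule (MonoidAlgebra ℤ G) M, N ≠ ⊥ → a ∈ N) :
    Finite M := by
  have hnoeth : IsNoetherianRing (MonoidAlgebra ℤ G) := (GP_nilpotent ℤ G).1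
  have hnt : Nontrivial M := ⟨a, 0, ha⟩
  let V := Submodule.span (MonoidAlgebra ℤ G) ({a} : Set M)
  have haV : a ∈ V := Submodule.mem_span_singleton_self a
  have hVle : ∀ N : Submodule (MonoidAlgebra ℤ G) M, N ≠ ⊥ → V ≤ N := fun N hN =>
    (Submodule.span_singleton_le_iff_mem a N).2 (hmono N hN)
  have hVne : V ≠ ⊥ := fun h => ha (by
    have := haV
    rw [h] at this; simpa using this)
  have hVs : IsSimpleModule (MonoidAlgebra ℤ G) V := by
    rw [isSimpleModule_iff_isAtom]
    refine ⟨hVne, fun N hN => ?_⟩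
    by_contra hne
    exact absurd (hVle N hne) (not_le_of_gt hN)
  obtain ⟨⟨p, hp, hpV⟩, hVend⟩ := simple_end (G := G) V
  -- characteristic
  obtain ⟨k, hk⟩ := nilp_of_kill a ha hmono (p : Module.End (MonoidAlgebra ℤ G) M) (by
    rw [Module.End.natCast_apply]
    exact congrArg Subtype.val (hpV ⟨a, haV⟩))
  let c := ringChar (Module.End (MonoidAlgebra ℤ G) M)
  have hc : c ≠ 0 := by
    intro h
    have h1 : ((p ^ k : ℕ) : Module.End (MonoidAlgebra ℤ G) M) = 0 := by push_cast; exact hk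
    have h2 := (CharP.cast_eq_zero_iff (Module.End (MonoidAlgebra ℤ G) M) c (p ^ k)).1 h1
    rw [h, zero_dvd_iff] at h2
    exact (pow_pos hp k).ne' h2
  have : NeZero c := ⟨hc⟩
  have hcM : ∀ m : M, c • m = 0 := by
    intro m
    have h0 : (c : Module.End (MonoidAlgebra ℤ G) M) = 0 := CharP.cast_eq_zero _ c
    rw [← Module.End.natCast_apply (R := MonoidAlgebra ℤ G) c m, h0, LinearMap.zero_apply]
  let _ : Algebra (ZMod c) (Module.End (MonoidAlgebra ℤ G) M) := ZMod.algebra _ c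
  -- automorphisms have finite order
  have hauto : ∀ φ : Module.End (MonoidAlgebra ℤ G) M, IsUnit φ → ∃ m : ℕ, 0 < m ∧ φ ^ m = 1 := by
    intro φ hφ
    have hbij := (Module.End.isUnit_iff φ).1 hφ
    have hst : ∀ v ∈ V, φ v ∈ V := by
      refine hVle (V.comap φ) (fun h => ?_)
      obtain ⟨b, hb⟩ := hbij.2 a
      have h1 : b ∈ V.comap φ := by rw [Submodule.mem_comap, hb]; exact haV
      rw [h] at h1
      have : b = 0 := by simpa using h1
      rw [this, map_zero] at hb
      exact ha hb.symm
    obtain ⟨m, hm, h1⟩ := hVend (φ.restrict hst) (fun h => by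
      have := congrArg (fun ψ => ((ψ ⟨a, haV⟩ : V) : M)) h
      simp only [LinearMap.restrict_apply, LinearMap.zero_apply, Submodule.coe_zero] at this
      exact ha (hbij.1 (by rw [this, map_zero])))
    have hka : (φ ^ m - 1) a = 0 := by
      rw [Module.End.pow_restrict m hst] at h1
      have := congrArg (fun ψ => ((ψ ⟨a, haV⟩ : V) : M)) h1
      simp only [LinearMap.restrict_apply, Module.End.one_apply] at this
      rw [LinearMap.sub_apply, this, Module.End.one_apply, sub_self]
    obtain ⟨l, hl⟩ := nilp_of_kill a ha hmono _ hka
    refine finite_order (A := ZMod c) φ hφ ⟨(Polynomial.X ^ m - 1) ^ l, ?_, ?_⟩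
    · exact (Polynomial.monic_X_pow_sub_C (1 : ZMod c) hm.ne').pow l
    · rw [← Polynomial.aeval_def]; simpa using hl
  -- the image group
  let ρ : G →* (AddMonoid.End M)ˣ :=
    ((Units.map (Module.toAddMonoidEnd (MonoidAlgebra ℤ G) M : _ →* _)).comp
      (Units.map (MonoidAlgebra.of ℤ G))).comp toUnits.toMonoidHom
  have hρ : ∀ g m, ((ρ g : (AddMonoid.End M)ˣ) : AddMonoid.End M) m
      = (MonoidAlgebra.single g 1 : MonoidAlgebra ℤ G) • m := fun _ _ => rfl
  have hfg : Group.FG ρ.range := Group.fg_of_surjective ρ.rangeRestrict_surjective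
  have hnil : Group.IsNilpotent ρ.range :=
    Group.nilpotent_of_surjective ρ.rangeRestrict ρ.rangeRestrict_surjective
  have hcent : ∀ z ∈ Subgroup.center ρ.range, IsOfFinOrder z := by
    intro z hz
    let e : AddMonoid.End M := ((z : (AddMonoid.End M)ˣ) : AddMonoid.End M)
    have hcomm : ∀ (g : G) (m : M), e ((MonoidAlgebra.single g 1 : MonoidAlgebra ℤ G) • m)
        = (MonoidAlgebra.single g 1 : MonoidAlgebra ℤ G) • e m := by
      intro g m
      have h1 := Subgroup.mem_center_iff.1 hz ⟨ρ g, g, rfl⟩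
      have h2 := congrArg (fun y : ρ.range => ((y : (AddMonoid.End M)ˣ) : AddMonoid.End M) m) h1
      exact h2.symm
    let φ : Module.End (MonoidAlgebra ℤ G) M :=
      { toFun := e
        map_add' := map_add e
        map_smul' := fun r m => by
          rw [RingHom.id_apply]
          induction r using MonoidAlgebra.induction_linear with
          | zero => simp
          | add a b ha hb => rw [add_smul, add_smul, map_add, ha, hb]
          | single g j =>
            have e1 : (MonoidAlgebra.single g j : MonoidAlgebra ℤ G)
              = j • MonoidAlgebra.single g 1 := by simp
            rw [e1, smul_assoc, smul_assoc, map_zsmul, hcomm] }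
    have hu : IsUnit φ := by
      rw [Module.End.isUnit_iff]
      have h1 : ∀ m, ((((z : (AddMonoid.End M)ˣ)⁻¹ : (AddMonoid.End M)ˣ)) : AddMonoid.End M) (e m)
          = m := fun m => by
        rw [← endMul_apply, Units.inv_mul]; rfl
      have h2 : ∀ m, e (((((z : (AddMonoid.End M)ˣ)⁻¹ : (AddMonoid.End M)ˣ)) : AddMonoid.End M) m)
          = m := fun m => by
        rw [← endMul_apply, Units.mul_inv]; rfl
      exact Function.bijective_iff_has_inverse.2 ⟨_, h1, h2⟩
    obtain ⟨m, hm, h⟩ := hauto φ hu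
    refine isOfFinOrder_iff_pow_eq_one.2 ⟨m, hm, ?_⟩
    have hpow : ∀ (n : ℕ) (x : M), (φ ^ n) x = (e ^ n) x := by
      intro n
      induction n with
      | zero => intro x; simp
      | succ n ih =>
        intro x
        rw [pow_succ, pow_succ, Module.End.mul_apply, endMul_apply, ih]; rfl
    ext x
    have h3 := hpow m x
    rw [h] at h3
    have h4 : (((z ^ m : ρ.range) : (AddMonoid.End M)ˣ) : AddMonoid.End M) = e ^ m := by
      simp [e]
    rw [h4, ← h3]; rfl
  have hfin : (((⊤ : Subgroup ρ.range)) : Set ρ.range).Finite :=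
    polyC_top.finite_of_torsion (torsion_of_center hcent)
  have hfinite : Finite ρ.range := Set.finite_univ_iff.1 (by simpa using hfin)
  -- M is a finitely generated abelian group
  obtain ⟨T, hT⟩ := (inferInstance : Module.Finite (MonoidAlgebra ℤ G) M).fg_top
  let Q : Set M := Set.range fun q : ρ.range × T =>
    ((q.1 : (AddMonoid.End M)ˣ) : AddMonoid.End M) (q.2 : M)
  have hQ : Q.Finite := Set.finite_range _
  have hspan : AddSubgroup.closure Q = ⊤ := by
    have hst : ∀ (g : G), ∀ m ∈ AddSubgroup.closure Q,
        (MonoidAlgebra.single g 1 : MonoidAlgebra ℤ G) • m ∈ AddSubgroup.closure Q := by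
      intro g m hm
      induction hm using AddSubgroup.closure_induction with
      | mem y hy =>
        obtain ⟨⟨γ, t⟩, rfl⟩ := hy
        exact AddSubgroup.subset_closure ⟨(⟨ρ g, g, rfl⟩ * γ, t), rfl⟩
      | zero => simp
      | add a b _ _ ha hb => rw [smul_add]; exact add_mem ha hb
      | neg a _ ha => rw [smul_neg]; exact neg_mem ha
    let N : Submodule (MonoidAlgebra ℤ G) M :=
      { (AddSubgroup.closure Q).toAddSubmonoid with
        smul_mem' := fun r m hm => by
          refine single_smul_closed (AddSubgroup.closure Q) (fun g j m hm => ?_) r m hm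
          have e1 : (MonoidAlgebra.single g j : MonoidAlgebra ℤ G)
              = j • MonoidAlgebra.single g 1 := by simp
          rw [e1, smul_assoc]
          exact zsmul_mem (hst g m hm) j }
    have hN : (⊤ : Submodule (MonoidAlgebra ℤ G) M) ≤ N := by
      rw [← hT, Submodule.span_le]
      intro t ht
      exact AddSubgroup.subset_closure ⟨(1, ⟨t, ht⟩), rfl⟩
    rw [eq_top_iff]
    intro m _
    exact hN (Submodule.mem_top (x := m))
  have hZ : Module.Finite ℤ M := by
    rw [Module.Finite.iff_addGroup_fg, AddGroup.fg_iff]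
    exact ⟨Q, hspan, hQ⟩
  refine Module.finite_of_fg_torsion M (fun m => ?_)
  exact ⟨⟨(c : ℤ), mem_nonZeroDivisors_of_ne_zero (by exact_mod_cast hc)⟩, by
    have := hcM m
    rw [← natCast_zsmul] at this
    exact this⟩

theorem stmt8 (G : Type) [Group G] [Group.FG G] [Group.IsNilpotent G]
    (M : Type) [AddCommGroup M] [Module (MonoidAlgebra ℤ G) M]
    [Module.Finite (MonoidAlgebra ℤ G) M] :
    (⨅ (N : Submodule (MonoidAlgebra ℤ G) M) (_ : Finite (M ⧸ N)), N) = ⊥ := by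
  rw [eq_bot_iff]
  intro a ha
  rw [Submodule.mem_bot]
  by_contra hne
  have hnoeth : IsNoetherianRing (MonoidAlgebra ℤ G) := (GP_nilpotent ℤ G).1
  obtain ⟨N, hN, hmax⟩ := set_has_maximal_iff_noetherian.2
    (inferInstance : IsNoetherian (MonoidAlgebra ℤ G) M)
    {N : Submodule (MonoidAlgebra ℤ G) M | a ∉ N} ⟨⊥, by simpa using hne⟩
  have haN : a ∉ N := hN
  have hfin : Finite (M ⧸ N) := by
    refine monolith_finite (G := G) (M ⧸ N) (N.mkQ a) (by simpa using haN) (fun P hP => ?_)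
    by_contra hPa
    have hle : N ≤ P.comap N.mkQ := fun n hn => by
      have : N.mkQ n = 0 := by simpa using hn
      rw [Submodule.mem_comap, this]; exact zero_mem _
    have hnlt := hmax (P.comap N.mkQ) hPa
    have heq : N = P.comap N.mkQ := by
      by_contra h
      exact hnlt (lt_of_le_of_ne hle h)
    apply hP
    rw [eq_bot_iff]
    intro y hy
    obtain ⟨y, rfl⟩ := N.mkQ_surjective y
    have h1 : y ∈ P.comap N.mkQ := hy
    rw [← heq] at h1
    simpa using h1
  simp only [Submodule.mem_iInf] at ha
  exact haN (ha N hfin)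
end
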